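/- There exists an absolute constant c > 0 such that the following holds. For any integers O ≥ S ≥ 5 and A ≥ 3, any horizon H with H ≥ 4·log₂ S, any α ∈ (0, 1/(5H)], and any ε ∈ (0, 0.01], there exists a finite family ℳ of finite episodic POMDPs with horizon H, with |𝒮| ≤ S, |𝒪| ≤ O, |𝒜| = A, each of which is single-step (m = 1) α-revealing, such that: for every T ∈ ℕ and every T-episode algorithm 𝔄 whose output satisfies ℙ_M^𝔄( V_M⋆ − V_M(π^out) < ε ) ≥ 3/4 for every M ∈ ℳ, one must have T ≥ c · min{ S·O^{1/2}·A·H/(α²ε²), S·A^{H/2}·H/ε² }. -/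

import Mathlib

/-!
The family consists of a reference POMDP and of POMDPs with a hidden combination lock.

*Construction.* There are `2 ^ d` fully observed states outside the lock (`S / 4 ≤ 2 ^ d`), where
the first `d` actions spell out a leaf, plus a good and a bad lock state. A key consists of a leaf,
an entry time, an entry action and a code in `A ^ H`. Entering the lock as the key says leads to the
good state with probability `16 ε`, entering otherwise leads to the bad one, and the good state
turns bad as soon as an action departs from the code. Inside the lock the observation is a pair in
`Fin k × Bool`, with `k` of order `O`: uniform in the bad state, and in the good state tilted by
`3 α` along an unknown sign pattern `μ : Fin k → Bool`. At the last step the tilt is total and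
public, and it alone carries the reward; staying outside is worth `1 / 2 + 4 ε`. The tilt makes the
emission matrix left invertible with norm at most `1 / α`. In the reference POMDP the good state is
unreachable, so an `ε`-optimal policy stays outside with probability above `3 / 4`; with a key, an
`ε`-optimal policy does so with probability below `1 / 4`.

*Information.* For a fixed key, compare the reference law of the transcript with its uniform
mixture over `μ`. In one episode the product of the likelihood ratios of `μ` and `ν`, discounted by
the exponential of `4 (16 ε) ^ 2` times a weighted count of the times at which the history was
consistent with the key, has mean at most `1`; the weight is `9 α ^ 2` times the positive part of
the correlation `ρ` of `μ` and `ν` before the last step, and `1` at the last step. Hence, with the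
likelihood ratios stopped once the totals of the two counts exceed budgets `m` and `m'`, the second
moment of the mixture is bounded by the average over `μ, ν` of
`exp (4 (16 ε) ^ 2 (9 α ^ 2 ρ⁺ (m + H) + m' + 1))`. As `ρ` is subgaussian of scale `1 / √k`, this is
at most `3 / 2` when `m` is of order `√O / (α ^ 2 ε ^ 2)` and `m'` of order `1 / ε ^ 2`.

*Counting.* In one episode at most one entry is tried, and then the codes still consistent shrink
by the factor `A` in each step. Averaged over the keys, the first count is therefore of order
`1 / (S A H)`, and the second one of order `A ^ (- H / 2) / (S H)`. If `T` is below the claimed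
bound, Markov's inequality yields a key for which the budgets are rarely exceeded, and the algorithm
cannot succeed both on the reference and on all POMDPs with this key.
-/

open Finset

noncomputable section

/-- A finite episodic POMDP with horizon `H`, latent state space `S`, observation space `O`,
action space `A`.  Steps are indexed by `1, …, H` (paper convention). -/
structure POMDP (S O A : Type) [Fintype S] [Fintype O] [Fintype A] (H : ℕ) where
  init : S → ℝ
  init_nonneg : ∀ s, 0 ≤ init s
  init_sum : ∑ s, init s = 1
  trans : ℕ → S → A → S → ℝ
  trans_nonneg : ∀ h s a s', 0 ≤ trans h s a s'
  trans_sum : ∀ h s a, ∑ s', trans h s a s' = 1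
  emit : ℕ → S → O → ℝ
  emit_nonneg : ∀ h s o, 0 ≤ emit h s o
  emit_sum : ∀ h s, ∑ o, emit h s o = 1
  reward : ℕ → O → A → ℝ
  reward_nonneg : ∀ h o a, 0 ≤ reward h o a
  reward_le_one : ∀ h o a, reward h o a ≤ 1
  reward_total : ∀ τ : Fin H → O × A, ∑ h : Fin H, reward (h.1 + 1) (τ h).1 (τ h).2 ≤ 1

namespace POMDP

variable {S O A : Type} [Fintype S] [Fintype O] [Fintype A] {H : ℕ}

/-- `emitActProb M m h s ω a` is the probability `ℙ_M(o_{h:h+m−1} = ω | s_h = s,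
a_{h:h+m−2} = a)` of observing the sequence `ω ∈ 𝒪^m` when the latent state at (1-based)
step `h` is `s` and the action sequence `a ∈ 𝒜^{m−1}` is executed. -/
def emitActProb (M : POMDP S O A H) : (m : ℕ) → ℕ → S → (Fin m → O) → (Fin (m - 1) → A) → ℝ
  | 0, _, _, _, _ => 1
  | 1, h, s, ω, _ => M.emit h s (ω 0)
  | m + 2, h, s, ω, a =>
    M.emit h s (ω 0) *
      ∑ s' : S, M.trans h s (a ⟨0, Nat.succ_pos m⟩) s' *
        emitActProb M (m + 1) (h + 1) s' (fun i => ω i.succ) (fun i => a i.succ)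

/-- The `m`-step emission–action matrix `𝕄_{h,m}` (`h` is the 1-based step index). -/
def emitActMatrix (M : POMDP S O A H) (h m : ℕ) :
    Matrix ((Fin m → O) × (Fin (m - 1) → A)) S ℝ :=
  Matrix.of fun p s => M.emitActProb m h s p.1 p.2

/-- The set of columns of the step-(h−1) transition matrix `𝕋_{h−1}`
(the single column `μ₁` when `h = 1`). -/
def stepCols (M : POMDP S O A H) (h : ℕ) : Set (S → ℝ) :=
  if h = 1 then {fun s => M.init s}
  else {c | ∃ s' a', c = fun s => M.trans (h - 1) s' a' s}

/-- `B` is a generalized left inverse of `𝕄_{h,m}`, i.e. `B · 𝕄_{h,m} · 𝕋_{h−1} = 𝕋_{h−1}`. -/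
def IsGenLeftInv (M : POMDP S O A H) (h m : ℕ)
    (B : Matrix S ((Fin m → O) × (Fin (m - 1) → A)) ℝ) : Prop :=
  ∀ c ∈ M.stepCols h, (B * M.emitActMatrix h m).mulVec c = c

end POMDP

/-- The star-norm `‖x‖_* = (Σ_a (Σ_ω |x(ω,a)|)²)^{1/2}`. -/
def starNorm {ι κ : Type} [Fintype ι] [Fintype κ] (x : ι × κ → ℝ) : ℝ :=
  Real.sqrt (∑ a : κ, (∑ ω : ι, |x (ω, a)|) ^ 2)

/-- The `(*→1)`-operator norm `‖B‖_{*→1} = max_{‖x‖_* ≤ 1} ‖Bx‖₁`. -/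
def opNormStarOne {S ι κ : Type} [Fintype S] [Fintype ι] [Fintype κ]
    (B : Matrix S (ι × κ) ℝ) : ℝ :=
  sSup {y | ∃ x : ι × κ → ℝ, starNorm x ≤ 1 ∧ y = ∑ s, |B.mulVec x s|}

/-- The `(1→1)`-operator norm `‖B‖_{1→1} = max_{‖y‖₁ ≤ 1} ‖By‖₁`. -/
def opNormOneOne {ι₁ ι₂ : Type} [Fintype ι₁] [Fintype ι₂] (B : Matrix ι₁ ι₂ ℝ) : ℝ :=
  sSup {y | ∃ v : ι₂ → ℝ, (∑ i, |v i|) ≤ 1 ∧ y = ∑ j, |B.mulVec v j|}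

namespace POMDP
variable {S O A : Type} [Fintype S] [Fintype O] [Fintype A] {H : ℕ}

/-- `M` is `m`-step `α`-revealing. -/
def IsRevealing (M : POMDP S O A H) (m : ℕ) (α : ℝ) : Prop :=
  ∀ h ∈ Finset.Icc 1 (H - m + 1),
    ∃ B : Matrix S ((Fin m → O) × (Fin (m - 1) → A)) ℝ,
      M.IsGenLeftInv h m B ∧ opNormStarOne B ≤ 1 / α

end POMDP

/-- A history-dependent policy: a distribution over actions for every (history, observation). -/
structure Policy (O A : Type) [Fintype A] where
  act : List (O × A) → O → A → ℝ
  act_nonneg : ∀ τ o a, 0 ≤ act τ o a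
  act_sum : ∀ τ o, ∑ a, act τ o a = 1

namespace POMDP
variable {S O A : Type} [Fintype S] [Fintype O] [Fintype A] {H : ℕ}

/-- The probability `ℙ_M^π(τ)` of a full trajectory `τ = (o_1,a_1,…,o_H,a_H)`. -/
def trajProb (M : POMDP S O A H) (π : Policy O A) (τ : Fin H → O × A) : ℝ :=
  ∑ s : Fin H → S, ∏ h : Fin H,
    (if h.1 = 0 then M.init (s h)
     else
       M.trans h.1 (s ⟨h.1 - 1, Nat.lt_of_le_of_lt (Nat.sub_le _ _) h.2⟩)
         (τ ⟨h.1 - 1, Nat.lt_of_le_of_lt (Nat.sub_le _ _) h.2⟩).2 (s h)) *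
    M.emit (h.1 + 1) (s h) (τ h).1 *
    π.act ((List.ofFn τ).take h.1) (τ h).1 (τ h).2

/-- The value `V_M(π)` of a policy. -/
def value (M : POMDP S O A H) (π : Policy O A) : ℝ :=
  ∑ τ : Fin H → O × A, M.trajProb π τ * ∑ h : Fin H, M.reward (h.1 + 1) (τ h).1 (τ h).2

/-- The optimal value `V_M⋆`. -/
def optValue (M : POMDP S O A H) : ℝ := ⨆ π : Policy O A, M.value π

end POMDP

/-- A `T`-episode algorithm: a distribution over actions for every
(past episodes, within-episode history, current observation), and an output policy map. -/
structure Algorithm (O A : Type) [Fintype A] (H : ℕ) where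
  act : List (Fin H → O × A) → List (O × A) → O → A → ℝ
  act_nonneg : ∀ past hist o a, 0 ≤ act past hist o a
  act_sum : ∀ past hist o, ∑ a, act past hist o a = 1
  out : List (Fin H → O × A) → Policy O A

/-- The policy executed by algorithm `𝔄` in the episode following the past episodes `past`. -/
def Algorithm.policyAt {O A : Type} [Fintype A] {H : ℕ} (𝔄 : Algorithm O A H)
    (past : List (Fin H → O × A)) : Policy O A :=
  ⟨fun hist o a => 𝔄.act past hist o a, fun _ _ _ => 𝔄.act_nonneg _ _ _ _,
    fun _ _ => 𝔄.act_sum _ _ _⟩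

namespace POMDP
variable {S O A : Type} [Fintype S] [Fintype O] [Fintype A] {H : ℕ}

/-- The law `ℙ_M^𝔄` of the transcript `(τ^{(1)},…,τ^{(T)})`. -/
def transcriptProb (M : POMDP S O A H) (𝔄 : Algorithm O A H) {T : ℕ}
    (τs : Fin T → Fin H → O × A) : ℝ :=
  ∏ t : Fin T, M.trajProb (𝔄.policyAt ((List.ofFn τs).take t.1)) (τs t)

open Classical in
/-- `ℙ_M^𝔄(V_M⋆ − V_M(π^out) < ε)`. -/
def pacProb (M : POMDP S O A H) (𝔄 : Algorithm O A H) (T : ℕ) (ε : ℝ) : ℝ :=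
  ∑ τs : Fin T → Fin H → O × A,
    if M.optValue - M.value (𝔄.out (List.ofFn τs)) < ε then M.transcriptProb 𝔄 τs else 0

/-- The expected regret `E_M^𝔄[Σ_{t=1}^T (V_M⋆ − V_M(π^{(t)}))]`. -/
def expRegret (M : POMDP S O A H) (𝔄 : Algorithm O A H) (T : ℕ) : ℝ :=
  ∑ τs : Fin T → Fin H → O × A,
    M.transcriptProb 𝔄 τs *
      ∑ t : Fin T, (M.optValue - M.value (𝔄.policyAt ((List.ofFn τs).take t.1)))

end POMDP

/-! ### Expectations over paths -/

section Paths
variable {X : Type*} {T : ℕ} {p : List X → X → ℝ}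

/-- The weight `∏ₜ p (x₀,…,xₜ₋₁) xₜ` of a path under a history-dependent kernel `p`. -/
def pathWeight (p : List X → X → ℝ) (τ : Fin T → X) : ℝ :=
  ∏ t : Fin T, p ((List.ofFn τ).take t) (τ t)

/-- The expectation of `Ψ` over paths of length `T` drawn from the kernel `p`. The function `Ψ`
receives the path newest entry first, so that it can be defined by structural recursion. -/
def pathExp [Fintype X] (p : List X → X → ℝ) (T : ℕ) (Ψ : List X → ℝ) : ℝ :=
  ∑ τ : Fin T → X, pathWeight p τ * Ψ (List.ofFn τ).reverse

lemma ofFn_snoc (τ : Fin T → X) (x : X) :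
    List.ofFn (Fin.snoc τ x : Fin (T + 1) → X) = List.ofFn τ ++ [x] := by
  rw [List.ofFn_succ']
  simp

lemma reverse_take_succ (τ : Fin T → X) {t : ℕ} (ht : t < T) :
    ((List.ofFn τ).take (t + 1)).reverse = τ ⟨t, ht⟩ :: ((List.ofFn τ).take t).reverse := by
  rw [List.take_add_one]
  simp [ht]

lemma sum_snoc [Fintype X] (F : (Fin (T + 1) → X) → ℝ) :
    ∑ τ, F τ = ∑ τ : Fin T → X, ∑ x, F (Fin.snoc τ x) := by
  rw [← (Fin.snocEquiv fun _ : Fin (T + 1) => X).sum_comp, Fintype.sum_prod_type, sum_comm]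
  rfl

lemma pathWeight_snoc (p : List X → X → ℝ) (τ : Fin T → X) (x : X) :
    pathWeight p (Fin.snoc τ x : Fin (T + 1) → X) = pathWeight p τ * p (List.ofFn τ) x := by
  unfold pathWeight
  rw [Fin.prod_univ_castSucc, ofFn_snoc]
  congr 1
  · refine prod_congr rfl fun t _ => ?_
    rw [List.take_append_of_le_length (by simp)]
    simp
  · simp

lemma pathWeight_nonneg (hp : ∀ l x, 0 ≤ p l x) (τ : Fin T → X) : 0 ≤ pathWeight p τ :=
  prod_nonneg fun _ _ => hp _ _

variable [Fintype X]

lemma pathExp_zero (p : List X → X → ℝ) (Ψ : List X → ℝ) : pathExp p 0 Ψ = Ψ [] := by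
  simp [pathExp, pathWeight]

lemma pathExp_succ (p : List X → X → ℝ) (T : ℕ) (Ψ : List X → ℝ) :
    pathExp p (T + 1) Ψ = pathExp p T fun r => ∑ x, p r.reverse x * Ψ (x :: r) := by
  simp only [pathExp, sum_snoc, mul_sum, pathWeight_snoc, ofFn_snoc, List.reverse_append,
    List.reverse_reverse, List.reverse_singleton, List.singleton_append, mul_assoc]

lemma pathExp_congr {Ψ Ψ' : List X → ℝ} (h : ∀ r, r.length = T → Ψ r = Ψ' r) :
    pathExp p T Ψ = pathExp p T Ψ' :=
  sum_congr rfl fun τ _ => by rw [h _ (by simp)]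

lemma pathExp_mono (hp : ∀ l x, 0 ≤ p l x) {Ψ Ψ' : List X → ℝ}
    (h : ∀ r, r.length = T → Ψ r ≤ Ψ' r) : pathExp p T Ψ ≤ pathExp p T Ψ' :=
  sum_le_sum fun τ _ => mul_le_mul_of_nonneg_left (h _ (by simp)) (pathWeight_nonneg hp τ)

lemma pathExp_nonneg (hp : ∀ l x, 0 ≤ p l x) {Ψ : List X → ℝ} (h : ∀ r, 0 ≤ Ψ r) :
    0 ≤ pathExp p T Ψ :=
  sum_nonneg fun τ _ => mul_nonneg (pathWeight_nonneg hp τ) (h _)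

lemma pathExp_add (Ψ Ψ' : List X → ℝ) :
    pathExp p T (fun r => Ψ r + Ψ' r) = pathExp p T Ψ + pathExp p T Ψ' := by
  simp only [pathExp, mul_add, sum_add_distrib]

lemma pathExp_const_mul (c : ℝ) (Ψ : List X → ℝ) :
    pathExp p T (fun r => c * Ψ r) = c * pathExp p T Ψ := by
  simp only [pathExp, mul_sum, mul_left_comm c]

lemma pathExp_sum {ι : Type*} (s : Finset ι) (Ψ : ι → List X → ℝ) :
    pathExp p T (fun r => ∑ i ∈ s, Ψ i r) = ∑ i ∈ s, pathExp p T (Ψ i) := by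
  simp only [pathExp, mul_sum]
  exact sum_comm

lemma pathExp_le_of_supermartingale (hp : ∀ l x, 0 ≤ p l x) {Ψ : List X → ℝ} (T : ℕ)
    (h : ∀ r : List X, r.length < T → ∑ x, p r.reverse x * Ψ (x :: r) ≤ Ψ r) :
    pathExp p T Ψ ≤ Ψ [] := by
  induction T with
  | zero => rw [pathExp_zero]
  | succ T ih =>
    rw [pathExp_succ]
    exact (pathExp_mono hp fun r hr => h r (by omega)).trans (ih fun r hr => h r (by omega))

lemma pathExp_eq_of_martingale {Ψ : List X → ℝ} (T : ℕ)
    (h : ∀ r : List X, r.length < T → ∑ x, p r.reverse x * Ψ (x :: r) = Ψ r) :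
    pathExp p T Ψ = Ψ [] := by
  induction T with
  | zero => rw [pathExp_zero]
  | succ T ih =>
    rw [pathExp_succ, pathExp_congr fun r hr => h r (by omega), ih fun r hr => h r (by omega)]

lemma pathExp_const (hp : ∀ l, ∑ x, p l x = 1) (T : ℕ) (c : ℝ) :
    pathExp p T (fun _ => c) = c :=
  pathExp_eq_of_martingale T fun r _ => by rw [← sum_mul, hp, one_mul]

/-- Two functionals that agree on an invariant of the paths with positive weight have the same
expectation. -/
lemma pathExp_congr_of_invariant {Inv : List X → Prop} (nil : Inv [])
    (cons : ∀ r x, Inv r → p r.reverse x ≠ 0 → Inv (x :: r)) {Ψ Ψ' : List X → ℝ}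
    (h : ∀ r, r.length = T → Inv r → Ψ r = Ψ' r) : pathExp p T Ψ = pathExp p T Ψ' := by
  induction T generalizing Ψ Ψ' with
  | zero => simp only [pathExp_zero, h [] rfl nil]
  | succ T ih =>
    rw [pathExp_succ, pathExp_succ]
    refine ih fun r hr hInv => sum_congr rfl fun x _ => ?_
    by_cases hx : p r.reverse x = 0
    · rw [hx, zero_mul, zero_mul]
    · rw [h (x :: r) (by simp [hr]) (cons r x hInv hx)]

end Paths

/-! ### The law of a trajectory -/

namespace POMDP
variable {S O A : Type} [Fintype S] [Fintype O] [Fintype A] {H : ℕ}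

/-- The law of the next latent state given the past latent states, observations and actions,
newest first. -/
def nextLaw (M : POMDP S O A H) : List (S × O × A) → S → ℝ
  | [] => M.init
  | x :: r => M.trans (r.length + 1) x.1 x.2.2

/-- The kernel generating latent state, observation and action of each step under a policy. -/
def stepKernel (M : POMDP S O A H) (π : Policy O A) (l : List (S × O × A)) (x : S × O × A) : ℝ :=
  M.nextLaw l.reverse x.1 * M.emit (l.length + 1) x.1 x.2.1 *
    π.act (l.map Prod.snd) x.2.1 x.2.2

/-- The unnormalised law of the next latent state: `fwd M r s` is the probability, under the
executed actions, of the observations in the reversed history `r` and of the latent state `s`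
afterwards. -/
def fwd (M : POMDP S O A H) : List (O × A) → S → ℝ
  | [] => M.init
  | x :: r => fun s' => ∑ s, fwd M r s * M.emit (r.length + 1) s x.1 *
      M.trans (r.length + 1) s x.2 s'

lemma nextLaw_cons (M : POMDP S O A H) (x : S × O × A) (r : List (S × O × A)) :
    M.nextLaw (x :: r) = M.trans (r.length + 1) x.1 x.2.2 :=
  rfl

lemma sum_nextLaw (M : POMDP S O A H) : ∀ r, ∑ s, M.nextLaw r s = 1
  | [] => M.init_sum
  | _ :: _ => M.trans_sum _ _ _

lemma nextLaw_nonneg (M : POMDP S O A H) : ∀ r s, 0 ≤ M.nextLaw r s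
  | [], _ => M.init_nonneg _
  | _ :: _, _ => M.trans_nonneg _ _ _ _

lemma stepKernel_nonneg (M : POMDP S O A H) (π : Policy O A) (l : List (S × O × A))
    (x : S × O × A) : 0 ≤ M.stepKernel π l x :=
  mul_nonneg (mul_nonneg (M.nextLaw_nonneg _ _) (M.emit_nonneg _ _ _)) (π.act_nonneg _ _ _)

lemma sum_stepKernel (M : POMDP S O A H) (π : Policy O A) (l : List (S × O × A)) :
    ∑ x, M.stepKernel π l x = 1 := by
  simp only [stepKernel, Fintype.sum_prod_type, ← mul_sum, π.act_sum, mul_one, M.emit_sum,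
    M.sum_nextLaw]

lemma trajProb_eq_sum_pathWeight (M : POMDP S O A H) (π : Policy O A) (τ : Fin H → O × A) :
    M.trajProb π τ = ∑ s : Fin H → S, pathWeight (M.stepKernel π) fun h => (s h, τ h) := by
  refine sum_congr rfl fun s _ => prod_congr rfl fun ⟨h, hh⟩ _ => ?_
  have hlen : ((List.ofFn fun h => (s h, τ h)).take h).length = h := by simp [hh.le]
  have hsnd : ((List.ofFn fun h => (s h, τ h)).take h).map Prod.snd = (List.ofFn τ).take h := by
    rw [List.map_take, List.map_ofFn]
    rfl
  rw [stepKernel, hlen, hsnd]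
  congr 2
  cases h with
  | zero => rfl
  | succ t =>
    rw [reverse_take_succ _ (by omega), nextLaw_cons, List.length_reverse, List.length_take_of_le
      (by simp; omega)]
    rfl

/-- Summing out the latent states leaves the policy's factors times the forward recursion. -/
lemma sum_pathWeight_mul_nextLaw (M : POMDP S O A H) (π : Policy O A) {T : ℕ}
    (τ : Fin T → O × A) (s' : S) :
    ∑ s : Fin T → S, pathWeight (M.stepKernel π) (fun h => (s h, τ h)) *
      M.nextLaw (List.ofFn fun h => (s h, τ h)).reverse s' =
    pathWeight (fun l x => π.act l x.1 x.2) τ * M.fwd (List.ofFn τ).reverse s' := by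
  induction T generalizing s' with
  | zero => simp [pathWeight, nextLaw, fwd]
  | succ T ih =>
    obtain ⟨τ, x, rfl⟩ : ∃ (σ : Fin T → O × A) (x : O × A), τ = Fin.snoc σ x :=
      ⟨_, _, (Fin.snoc_init_self τ).symm⟩
    have hzip : ∀ (s : Fin T → S) (y : S),
        (fun h => ((Fin.snoc s y : Fin (T + 1) → S) h, (Fin.snoc τ x : Fin (T + 1) → O × A) h)) =
          (Fin.snoc (fun h => (s h, τ h)) (y, x) : Fin (T + 1) → S × O × A) := by
      intro s y
      ext h <;> refine Fin.lastCases ?_ (fun i => ?_) h <;> simp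
    have hmap : ∀ s : Fin T → S, (List.ofFn fun h => (s h, τ h)).map Prod.snd = List.ofFn τ :=
      fun s => by rw [List.map_ofFn]; rfl
    simp only [sum_snoc, hzip, pathWeight_snoc, ofFn_snoc, List.reverse_append,
      List.reverse_singleton, List.singleton_append, nextLaw_cons, fwd, stepKernel, hmap,
      List.length_reverse, List.length_ofFn]
    rw [sum_comm, mul_sum]
    refine sum_congr rfl fun y _ => ?_
    have := congr_arg (· * (M.emit (T + 1) y x.1 * π.act (List.ofFn τ) x.1 x.2 *
      M.trans (T + 1) y x.2 s')) (ih τ y)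
    simp only [sum_mul] at this
    convert this using 1
    · exact sum_congr rfl fun s _ => by ring
    · ring

lemma trajProb_eq_mul_fwd (M : POMDP S O A H) (π : Policy O A) (τ : Fin H → O × A) :
    M.trajProb π τ =
      pathWeight (fun l x => π.act l x.1 x.2) τ * ∑ s, M.fwd (List.ofFn τ).reverse s := by
  rw [trajProb_eq_sum_pathWeight, mul_sum]
  simp only [← sum_pathWeight_mul_nextLaw]
  rw [sum_comm]
  simp only [← mul_sum, sum_nextLaw, mul_one]

lemma trajProb_nonneg (M : POMDP S O A H) (π : Policy O A) (τ : Fin H → O × A) :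
    0 ≤ M.trajProb π τ := by
  rw [trajProb_eq_sum_pathWeight]
  exact sum_nonneg fun _ _ => pathWeight_nonneg (M.stepKernel_nonneg π) _

lemma sum_trajProb (M : POMDP S O A H) (π : Policy O A) : ∑ τ, M.trajProb π τ = 1 := by
  have hpaths : ∑ σ : Fin H → S × O × A, pathWeight (M.stepKernel π) σ = 1 := by
    simpa [pathExp] using pathExp_const (M.sum_stepKernel π) H 1
  rw [← hpaths, ← (Equiv.arrowProdEquivProdArrow (Fin H) (fun _ => S)
    (fun _ => O × A)).symm.sum_comp, Fintype.sum_prod_type, sum_comm]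
  exact sum_congr rfl fun τ _ => M.trajProb_eq_sum_pathWeight π τ

lemma value_le_one (M : POMDP S O A H) (π : Policy O A) : M.value π ≤ 1 := by
  rw [← M.sum_trajProb π]
  exact sum_le_sum fun τ _ =>
    mul_le_of_le_one_right (M.trajProb_nonneg π τ) (M.reward_total τ)

lemma value_le_optValue (M : POMDP S O A H) (π : Policy O A) : M.value π ≤ M.optValue :=
  le_ciSup ⟨1, Set.forall_mem_range.2 M.value_le_one⟩ π

end POMDP

/-! ### POMDPs with a hidden combination lock -/

/-- The public part of a lock POMDP. Before entering the lock the latent state is an element of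
`L`, moved deterministically by `move t x a` at (0-based) time `t`, where `none` means entering the
lock. `emit z` is the law of the observation in the state `z : L`, and `emit none` the one in the
bad lock state. -/
structure LockFrame (L O A : Type) [Fintype O] where
  start : L
  move : ℕ → L → A → Option L
  emit : Option L → O → ℝ
  emit_nonneg : ∀ z o, 0 ≤ emit z o
  emit_sum : ∀ z, ∑ o, emit z o = 1

/-- The secret of a lock POMDP: `hit t x a` says that entering the lock at time `t` from `x` by
the action `a` may lead to the good lock state, and `stay t a` says that the action `a` at time
`t` keeps the latent state good. -/
structure LockSecret (L A : Type) where
  hit : ℕ → L → A → Bool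
  stay : ℕ → A → Bool

/-- The relative deviation `val t` of the observation law in the good lock state at time `t` from
the one in the bad lock state. -/
structure LockSignal {L O A : Type} [Fintype O] (F : LockFrame L O A) where
  val : ℕ → O → ℝ
  neg_one_le : ∀ t o, -1 ≤ val t o
  mean_zero : ∀ t, ∑ o, F.emit none o * val t o = 0

namespace LockFrame
variable {L O A : Type} [Fintype O] (F : LockFrame L O A) (Z : LockSecret L A) (G : LockSignal F)

/-- The latent state in `L` after the reversed history `r`, or `none` inside the lock. -/
def position : List (O × A) → Option L
  | [] => some F.start
  | x :: r => (position r).bind fun y => F.move r.length y x.2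

/-- Whether the actions in the reversed history `r` entered the lock at the secret place and obeyed
the secret ever since. -/
def consistent : List (O × A) → Bool
  | [] => false
  | x :: r => match F.position r with
    | some y => (F.move r.length y x.2).isNone && Z.hit r.length y x.2
    | none => consistent r && Z.stay r.length x.2

/-- The likelihood ratio of the observations when the secret entry always succeeds, against the
case where it always fails. -/
def likRatio : List (O × A) → ℝ
  | [] => 1
  | x :: r => if F.consistent Z r then likRatio r * (1 + G.val r.length x.1) else likRatio r

/-- The likelihood ratio of an episode when the secret entry succeeds with probability `η`, against
the case where it always fails. -/
def mixedRatio (η : ℝ) (r : List (O × A)) : ℝ :=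
  1 - η + η * F.likRatio Z G r

/-- The likelihood of the observations when the good lock state is never reached. -/
def baseLik : List (O × A) → ℝ
  | [] => 1
  | x :: r => baseLik r * F.emit (F.position r) x.1

/-- Latent dynamics in which an attempted entry succeeds (`β = true`, at the secret place only) or
fails (`β = false`). The lock states are `Sum.inr true` (good) and `Sum.inr false` (bad). -/
def step (β : Bool) (t : ℕ) (s : L ⊕ Bool) (a : A) : L ⊕ Bool :=
  match s with
  | Sum.inl x => match F.move t x a with
    | some y => Sum.inl y
    | none => Sum.inr (β && Z.hit t x a)
  | Sum.inr g => Sum.inr (g && Z.stay t a)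

/-- The latent state reached under `LockFrame.step`. -/
def latent (β : Bool) (r : List (O × A)) : L ⊕ Bool :=
  match F.position r with
  | some y => Sum.inl y
  | none => Sum.inr (β && F.consistent Z r)

/-- The emission law of the latent states. -/
def emitLatent (t : ℕ) (s : L ⊕ Bool) (o : O) : ℝ :=
  match s with
  | Sum.inl x => F.emit (some x) o
  | Sum.inr false => F.emit none o
  | Sum.inr true => F.emit none o * (1 + G.val t o)

lemma emitLatent_nonneg (t : ℕ) (s : L ⊕ Bool) (o : O) : 0 ≤ F.emitLatent G t s o := by
  rcases s with x | _ | _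
  · exact F.emit_nonneg _ _
  · exact F.emit_nonneg _ _
  · exact mul_nonneg (F.emit_nonneg _ _) (by linarith [G.neg_one_le t o])

lemma sum_emitLatent (t : ℕ) (s : L ⊕ Bool) : ∑ o, F.emitLatent G t s o = 1 := by
  rcases s with x | _ | _
  · exact F.emit_sum _
  · exact F.emit_sum _
  · simp only [emitLatent, mul_add, mul_one, sum_add_distrib, F.emit_sum, G.mean_zero, add_zero]

lemma step_latent (β : Bool) (r : List (O × A)) (x : O × A) :
    F.step Z β r.length (F.latent Z β r) x.2 = F.latent Z β (x :: r) := by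
  rcases hp : F.position r with _ | y
  · simp [step, latent, position, consistent, hp, Bool.and_assoc]
  · rcases hm : F.move r.length y x.2 with _ | z <;>
    simp [step, latent, position, consistent, hp, hm]

lemma consistent_cons_of_none {r : List (O × A)} (h : F.position r = none) (x : O × A) :
    F.consistent Z (x :: r) = (F.consistent Z r && Z.stay r.length x.2) := by
  simp [consistent, h]

lemma consistent_cons_of_some {r : List (O × A)} {y : L} (h : F.position r = some y) (x : O × A) :
    F.consistent Z (x :: r) = ((F.move r.length y x.2).isNone && Z.hit r.length y x.2) := by
  simp [consistent, h]

lemma consistent_eq_false_of_position {r : List (O × A)} {y : L} (h : F.position r = some y) :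
    F.consistent Z r = false := by
  cases r with
  | nil => rfl
  | cons x r =>
    rcases hp : F.position r with _ | z
    · simp [position, hp] at h
    · simp only [position, hp, Option.bind_some] at h
      simp [consistent, hp, h]

lemma likRatio_eq_one_of_position {r : List (O × A)} {y : L} (h : F.position r = some y) :
    F.likRatio Z G r = 1 := by
  induction r generalizing y with
  | nil => rfl
  | cons x r ih =>
    rcases hp : F.position r with _ | z
    · simp [position, hp] at h
    · simp [likRatio, F.consistent_eq_false_of_position Z hp, ih hp]

lemma likRatio_mul_emitLatent (r : List (O × A)) (x : O × A) :
    F.likRatio Z G r * F.emitLatent G r.length (F.latent Z true r) x.1 =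
      F.emit (F.position r) x.1 * F.likRatio Z G (x :: r) := by
  rcases hp : F.position r with _ | y
  · rcases hc : F.consistent Z r <;> simp [latent, hp, hc, emitLatent, likRatio] <;> ring
  · simp [latent, hp, emitLatent, likRatio, F.consistent_eq_false_of_position Z hp,
      F.likRatio_eq_one_of_position Z G hp]

lemma emitLatent_latent_false (t : ℕ) (r : List (O × A)) (o : O) :
    F.emitLatent G t (F.latent Z false r) o = F.emit (F.position r) o := by
  rcases hp : F.position r with _ | y <;> simp [latent, hp, emitLatent]

lemma baseLik_reverse {T : ℕ} (τ : Fin T → O × A) :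
    F.baseLik (List.ofFn τ).reverse =
      pathWeight (fun l x => F.emit (F.position l.reverse) x.1) τ := by
  induction T with
  | zero => simp [baseLik, pathWeight]
  | succ T ih =>
    rw [← Fin.snoc_init_self τ, pathWeight_snoc, ofFn_snoc, List.reverse_append, ← ih]
    simp [baseLik]

variable [Fintype A]

/-- The law of the next (observation, action) pair when the good lock state is never reached. -/
def kernel (π : Policy O A) (l : List (O × A)) (x : O × A) : ℝ :=
  F.emit (F.position l.reverse) x.1 * π.act l x.1 x.2

lemma kernel_nonneg (π : Policy O A) (l : List (O × A)) (x : O × A) : 0 ≤ F.kernel π l x :=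
  mul_nonneg (F.emit_nonneg _ _) (π.act_nonneg _ _ _)

lemma sum_kernel_mul_fst (π : Policy O A) (r : List (O × A)) (f : O → ℝ) :
    ∑ x, F.kernel π r.reverse x * f x.1 = ∑ o, F.emit (F.position r) o * f o := by
  simp only [kernel, List.reverse_reverse, Fintype.sum_prod_type, mul_right_comm _ _ (f _),
    ← mul_sum, π.act_sum, mul_one]

lemma sum_kernel (π : Policy O A) (l : List (O × A)) : ∑ x, F.kernel π l x = 1 := by
  simpa [F.emit_sum] using F.sum_kernel_mul_fst π l.reverse fun _ => 1

variable {S : Type} [Fintype S] [DecidableEq L] {H : ℕ}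

lemma sum_pointMass_mul {L' : Type} [DecidableEq L'] (e : S ≃ L') (u : L') (f : L' → ℝ) :
    ∑ s, (if e s = u then 1 else 0) * f (e s) = f u := by
  rw [Fintype.sum_eq_single (e.symm u) fun s hs => by
    rw [if_neg fun h => hs (e.eq_symm_apply.2 h), zero_mul]]
  simp

/-- The lock POMDP in which an attempt at the secret entry succeeds with probability `η`, with the
latent states named by `e`. The reward `R o` is collected in the last step only. -/
def model (e : S ≃ L ⊕ Bool) (R : O → unitInterval) (η : unitInterval) : POMDP S O A H where
  init s := if e s = Sum.inl F.start then 1 else 0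
  init_nonneg s := by split_ifs <;> norm_num
  init_sum := by simpa using sum_pointMass_mul e (Sum.inl F.start) fun _ => 1
  trans h s a s' := (1 - η) * (if e s' = F.step Z false (h - 1) (e s) a then 1 else 0) +
    η * (if e s' = F.step Z true (h - 1) (e s) a then 1 else 0)
  trans_nonneg h s a s' := by
    have := η.2.1
    have : 0 ≤ 1 - (η : ℝ) := sub_nonneg.2 η.2.2
    positivity
  trans_sum h s a := by
    have hmass : ∀ u, ∑ s', (if e s' = u then 1 else 0) = (1 : ℝ) := fun u => by
      simpa using sum_pointMass_mul e u fun _ => 1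
    rw [sum_add_distrib, ← mul_sum, ← mul_sum, hmass, hmass, mul_one, mul_one, sub_add_cancel]
  emit h s o := F.emitLatent G (h - 1) (e s) o
  emit_nonneg h s o := F.emitLatent_nonneg G _ _ _
  emit_sum h s := F.sum_emitLatent G _ _
  reward h o _ := if h = H then R o else 0
  reward_nonneg h o _ := by split_ifs; exacts [(R o).2.1, le_rfl]
  reward_le_one h o _ := by split_ifs; exacts [(R o).2.2, zero_le_one]
  reward_total τ := by
    rcases H with _ | H
    · simp
    · rw [Fin.sum_univ_castSucc, sum_eq_zero fun b _ => if_neg (by simp; omega), zero_add]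
      simpa using (R _).2.2

variable (e : S ≃ L ⊕ Bool) (R : O → unitInterval) (η : unitInterval)

lemma sum_trans_model_mul (t : ℕ) (s : S) (a : A) (f : L ⊕ Bool → ℝ) :
    ∑ s', (F.model (H := H) Z G e R η).trans (t + 1) s a s' * f (e s') =
      (1 - η) * f (F.step Z false t (e s) a) + η * f (F.step Z true t (e s) a) := by
  simp only [model, Nat.add_sub_cancel, add_mul, sum_add_distrib, mul_assoc, ← mul_sum,
    sum_pointMass_mul]

/-- The one random bit of the model, whether the secret entry succeeds, makes the forward vector a
mixture of two point masses. -/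
lemma sum_fwd_model_mul (r : List (O × A)) (f : L ⊕ Bool → ℝ) :
    ∑ s, (F.model (H := H) Z G e R η).fwd r s * f (e s) = F.baseLik r *
      ((1 - η) * f (F.latent Z false r) + η * F.likRatio Z G r * f (F.latent Z true r)) := by
  induction r generalizing f with
  | nil =>
    simp only [POMDP.fwd, model, sum_pointMass_mul, baseLik, latent, position, likRatio]
    ring
  | cons x r ih =>
    have hemit : ∀ s, (F.model (H := H) Z G e R η).emit (r.length + 1) s x.1 =
      F.emitLatent G r.length (e s) x.1 := fun _ => rfl
    simp only [POMDP.fwd, sum_mul]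
    rw [sum_comm]
    simp only [mul_assoc, ← mul_sum, sum_trans_model_mul, hemit]
    rw [ih fun u => F.emitLatent G r.length u x.1 * ((1 - η) * f (F.step Z false r.length u x.2) +
      η * f (F.step Z true r.length u x.2)), emitLatent_latent_false, mul_assoc (η : ℝ),
      ← mul_assoc (F.likRatio Z G r), likRatio_mul_emitLatent, ← step_latent, ← step_latent,
      baseLik]
    rcases hp : F.position r with _ | y
    · have hstep : ∀ β β', F.step Z β r.length (F.latent Z β' r) x.2 =
          F.step Z β' r.length (F.latent Z β' r) x.2 := fun β β' => by simp [latent, hp, step]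
      rw [hstep true false, hstep false true]
      ring
    · have hlik : F.likRatio Z G (x :: r) = 1 := by
        simp [likRatio, F.consistent_eq_false_of_position Z hp,
          F.likRatio_eq_one_of_position Z G hp]
      have hlat : F.latent Z false r = F.latent Z true r := by simp [latent, hp]
      rw [hlik, hlat]
      ring

lemma trajProb_model (π : Policy O A) (τ : Fin H → O × A) :
    (F.model Z G e R η).trajProb π τ =
      pathWeight (F.kernel π) τ * F.mixedRatio Z G η (List.ofFn τ).reverse := by
  have hfwd := F.sum_fwd_model_mul (H := H) Z G e R η (List.ofFn τ).reverse fun _ => 1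
  simp only [mul_one] at hfwd
  rw [POMDP.trajProb_eq_mul_fwd, hfwd, baseLik_reverse, ← mul_assoc, mixedRatio]
  congr 1
  simp only [pathWeight, kernel, ← prod_mul_distrib, mul_comm]

end LockFrame

/-! ### Likelihood ratios within one episode -/

lemma one_add_mul_exp_neg_le_one (x : ℝ) : (1 + x) * Real.exp (-x) ≤ 1 := by
  rw [Real.exp_neg, ← div_eq_mul_inv, div_le_one (Real.exp_pos x), add_comm]
  exact Real.add_one_le_exp x

lemma sum_mul_affine_mul_affine {ι : Type*} [Fintype ι] {w g g' : ι → ℝ} (hw : ∑ i, w i = 1)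
    (hg : ∑ i, w i * g i = 0) (hg' : ∑ i, w i * g' i = 0) (a b a' b' : ℝ) :
    ∑ i, w i * ((a + b * g i) * (a' + b' * g' i)) =
      a * a' + b * b' * ∑ i, w i * (g i * g' i) := by
  calc _ = a * a' * ∑ i, w i + b * a' * ∑ i, w i * g i + a * b' * ∑ i, w i * g' i +
        b * b' * ∑ i, w i * (g i * g' i) := by
        simp only [mul_sum, ← sum_add_distrib]
        exact sum_congr rfl fun i _ => by ring
    _ = _ := by rw [hw, hg, hg']; ring

namespace LockFrame
variable {L O A : Type} [Fintype O] (F : LockFrame L O A) (Z : LockSecret L A)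
  (G G' : LockSignal F)

/-- The total `w`-weight of the times at which the reversed history `r` was consistent with the
secret, that is, of the times at which the latent state could have been good. -/
def exposure (w : ℕ → ℝ) : List (O × A) → ℝ
  | [] => 0
  | _ :: r => exposure w r + if F.consistent Z r then w r.length else 0

lemma exposure_linear (c c' : ℝ) (w w' : ℕ → ℝ) (r : List (O × A)) :
    F.exposure Z (fun t => c * w t + c' * w' t) r =
      c * F.exposure Z w r + c' * F.exposure Z w' r := by
  induction r with
  | nil => simp [exposure]
  | cons x r ih => simp only [exposure, ih]; split_ifs <;> ring

lemma exposure_nonneg {w : ℕ → ℝ} (hw : ∀ t, 0 ≤ w t) (r : List (O × A)) :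
    0 ≤ F.exposure Z w r := by
  induction r with
  | nil => simp [exposure]
  | cons x r ih => simp only [exposure]; split_ifs <;> linarith [hw r.length]

lemma exposure_eq_zero_of_position (w : ℕ → ℝ) {r : List (O × A)} {y : L}
    (h : F.position r = some y) : F.exposure Z w r = 0 := by
  induction r generalizing y with
  | nil => rfl
  | cons x r ih =>
    rcases hp : F.position r with _ | z
    · simp [position, hp] at h
    · simp [exposure, ih hp, F.consistent_eq_false_of_position Z hp]

lemma exposure_eq_zero_of_weight {w : ℕ → ℝ} {r : List (O × A)} (h : ∀ t < r.length, w t = 0) :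
    F.exposure Z w r = 0 := by
  induction r with
  | nil => rfl
  | cons x r ih =>
    rw [List.length_cons] at h
    simp [exposure, ih fun t ht => h t (by omega), h r.length (by omega)]

lemma likRatio_cons (x : O × A) (r : List (O × A)) :
    F.likRatio Z G (x :: r) =
      F.likRatio Z G r * (1 + (if F.consistent Z r then 1 else 0) * G.val r.length x.1) := by
  rw [likRatio]
  split_ifs <;> ring

lemma mixedRatio_cons (η : ℝ) (x : O × A) (r : List (O × A)) :
    F.mixedRatio Z G η (x :: r) = F.mixedRatio Z G η r +
      (if F.consistent Z r then η * F.likRatio Z G r else 0) * G.val r.length x.1 := by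
  rw [mixedRatio, mixedRatio, likRatio_cons]
  split_ifs <;> ring

lemma likRatio_nonneg (r : List (O × A)) : 0 ≤ F.likRatio Z G r := by
  induction r with
  | nil => simp [likRatio]
  | cons x r ih =>
    rw [likRatio]
    split_ifs
    · exact mul_nonneg ih (by linarith [G.neg_one_le r.length x.1])
    · exact ih

lemma mixedRatio_nonneg {η : ℝ} (hη0 : 0 ≤ η) (hη1 : η ≤ 1) (r : List (O × A)) :
    0 ≤ F.mixedRatio Z G η r :=
  add_nonneg (sub_nonneg.2 hη1) (mul_nonneg hη0 (F.likRatio_nonneg Z G r))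

lemma likRatio_le_pow {B : ℝ} (hB : 0 ≤ B) {H : ℕ} (hG : ∀ t o, t + 1 < H → G.val t o ≤ B)
    {r : List (O × A)} (hr : r.length < H) : F.likRatio Z G r ≤ (1 + B) ^ r.length := by
  induction r with
  | nil => simp [likRatio]
  | cons x r ih =>
    rw [List.length_cons] at hr
    rw [likRatio_cons, List.length_cons, pow_succ]
    refine mul_le_mul (ih (by omega)) ?_ ?_ (by positivity)
    · split_ifs <;> linarith [hG r.length x.1 hr]
    · split_ifs <;> linarith [G.neg_one_le r.length x.1]

/-- The posterior odds of a successful entry grow by at most the factor `2`. -/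
lemma likRatio_le_two_mul_mixedRatio {η : ℝ} (hη0 : 0 ≤ η) (hη : η ≤ 1 / 2) {r : List (O × A)}
    (hr : F.likRatio Z G r ≤ 2) : F.likRatio Z G r ≤ 2 * F.mixedRatio Z G η r := by
  rw [mixedRatio]
  nlinarith

lemma sum_emit_position_mul_val {r : List (O × A)} (hr : F.consistent Z r) :
    ∑ o, F.emit (F.position r) o * G.val r.length o = 0 := by
  rcases hp : F.position r with _ | y
  · exact G.mean_zero _
  · rw [F.consistent_eq_false_of_position Z hp] at hr
    cases hr

variable [Fintype A] (π : Policy O A)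

lemma sum_kernel_mul_likRatio (r : List (O × A)) :
    ∑ x, F.kernel π r.reverse x * F.likRatio Z G (x :: r) = F.likRatio Z G r := by
  simp only [likRatio_cons]
  rw [F.sum_kernel_mul_fst π r fun o => F.likRatio Z G r *
    (1 + (if F.consistent Z r then 1 else 0) * G.val r.length o)]
  split_ifs with hr
  · simp only [mul_left_comm _ (F.likRatio Z G r), ← mul_sum]
    simp only [mul_add, sum_add_distrib, mul_one, one_mul, F.emit_sum,
      F.sum_emit_position_mul_val Z G hr, add_zero]
  · simp only [zero_mul, add_zero, mul_one, ← sum_mul, F.emit_sum, one_mul]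

lemma pathExp_likRatio (T : ℕ) : pathExp (F.kernel π) T (F.likRatio Z G) = 1 :=
  pathExp_eq_of_martingale T fun r _ => F.sum_kernel_mul_likRatio Z G π r

lemma pathExp_mixedRatio (T : ℕ) (η : ℝ) : pathExp (F.kernel π) T (F.mixedRatio Z G η) = 1 := by
  unfold mixedRatio
  rw [pathExp_add, pathExp_const_mul, pathExp_likRatio, pathExp_const (F.sum_kernel π)]
  ring

lemma sum_kernel_mul_mixedRatio_mul_mixedRatio (η : ℝ) (r : List (O × A)) :
    ∑ x, F.kernel π r.reverse x * (F.mixedRatio Z G η (x :: r) * F.mixedRatio Z G' η (x :: r)) =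
      F.mixedRatio Z G η r * F.mixedRatio Z G' η r + if F.consistent Z r then
        η * F.likRatio Z G r * (η * F.likRatio Z G' r) *
          ∑ o, F.emit none o * (G.val r.length o * G'.val r.length o) else 0 := by
  simp only [mixedRatio_cons]
  rw [F.sum_kernel_mul_fst π r fun o => (F.mixedRatio Z G η r + (if F.consistent Z r then
    η * F.likRatio Z G r else 0) * G.val r.length o) * (F.mixedRatio Z G' η r +
    (if F.consistent Z r then η * F.likRatio Z G' r else 0) * G'.val r.length o)]
  split_ifs with hr
  · rw [sum_mul_affine_mul_affine (F.emit_sum _) (F.sum_emit_position_mul_val Z G hr)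
      (F.sum_emit_position_mul_val Z G' hr)]
    rcases hp : F.position r with _ | y
    · rfl
    · rw [F.consistent_eq_false_of_position Z hp] at hr
      cases hr
  · simp only [zero_mul, add_zero, ← sum_mul, F.emit_sum, one_mul]

/-- At a time of exposure the posterior probability of the good state is at most `2 * η`, so one
observation contributes at most `4 * η ^ 2` times the correlation of the signals. -/
lemma sum_kernel_mul_mixedRatio_mul_mixedRatio_le {η w : ℝ} (hη0 : 0 ≤ η) (hη : η ≤ 1 / 2)
    (hw : 0 ≤ w) {r : List (O × A)}
    (hcorr : ∑ o, F.emit none o * (G.val r.length o * G'.val r.length o) ≤ w)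
    (hr : F.likRatio Z G r ≤ 2) (hr' : F.likRatio Z G' r ≤ 2) :
    ∑ x, F.kernel π r.reverse x * (F.mixedRatio Z G η (x :: r) * F.mixedRatio Z G' η (x :: r)) ≤
      F.mixedRatio Z G η r * F.mixedRatio Z G' η r *
        (1 + if F.consistent Z r then 4 * η ^ 2 * w else 0) := by
  rw [sum_kernel_mul_mixedRatio_mul_mixedRatio]
  split_ifs
  · have hlik := mul_le_mul (F.likRatio_le_two_mul_mixedRatio Z G hη0 hη hr)
      (F.likRatio_le_two_mul_mixedRatio Z G' hη0 hη hr') (F.likRatio_nonneg Z G' r)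
      (mul_nonneg zero_le_two (F.mixedRatio_nonneg Z G hη0 (by linarith) r))
    have hpos := mul_nonneg (F.likRatio_nonneg Z G r) (F.likRatio_nonneg Z G' r)
    have hcorr' := mul_le_mul_of_nonneg_left hcorr (mul_nonneg (sq_nonneg η) hpos)
    have hlik' := mul_le_mul_of_nonneg_left hlik (mul_nonneg (sq_nonneg η) hw)
    linarith
  · rw [add_zero, add_zero, mul_one]

/-- The second moment of the likelihood ratios of two signals, discounted by the exposure. -/
lemma pathExp_mixedRatio_mul_mixedRatio_le {η : ℝ} (hη0 : 0 ≤ η) (hη : η ≤ 1 / 2) {w : ℕ → ℝ}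
    {H : ℕ} (hw : ∀ t, 0 ≤ w t)
    (hcorr : ∀ t < H, ∑ o, F.emit none o * (G.val t o * G'.val t o) ≤ w t)
    (hlik : ∀ r : List (O × A), r.length < H → F.likRatio Z G r ≤ 2)
    (hlik' : ∀ r : List (O × A), r.length < H → F.likRatio Z G' r ≤ 2) :
    pathExp (F.kernel π) H (fun r => F.mixedRatio Z G η r * F.mixedRatio Z G' η r *
      Real.exp (-(4 * η ^ 2 * F.exposure Z w r))) ≤ 1 := by
  refine (pathExp_le_of_supermartingale (F.kernel_nonneg π) H fun r hr => ?_).trans_eq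
    (by simp [mixedRatio, likRatio, exposure])
  set x := if F.consistent Z r then 4 * η ^ 2 * w r.length else 0 with hx
  set E := Real.exp (-(4 * η ^ 2 * F.exposure Z w r))
  have hexp : ∀ y : O × A,
      Real.exp (-(4 * η ^ 2 * F.exposure Z w (y :: r))) = Real.exp (-x) * E := fun y => by
    rw [exposure, hx, ← Real.exp_add]
    split_ifs <;> ring_nf
  have hη1 : η ≤ 1 := by linarith
  have hE : 0 ≤ Real.exp (-x) * E := by positivity
  have hm := mul_nonneg (mul_nonneg (F.mixedRatio_nonneg Z G hη0 hη1 r)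
    (F.mixedRatio_nonneg Z G' hη0 hη1 r)) (Real.exp_nonneg _ : 0 ≤ E)
  simp only [hexp, ← mul_assoc (F.kernel π _ _), ← sum_mul]
  simp only [mul_assoc (F.kernel π _ _)]
  calc _ ≤ F.mixedRatio Z G η r * F.mixedRatio Z G' η r * (1 + x) * (Real.exp (-x) * E) :=
        mul_le_mul_of_nonneg_right (F.sum_kernel_mul_mixedRatio_mul_mixedRatio_le Z G G' π hη0 hη
          (hw _) (hcorr _ hr) (hlik r hr) (hlik' r hr)) hE
    _ = F.mixedRatio Z G η r * F.mixedRatio Z G' η r * E * ((1 + x) * Real.exp (-x)) := by ring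
    _ ≤ _ := mul_le_of_le_one_right hm (one_add_mul_exp_neg_le_one x)

end LockFrame

/-! ### Values of policies -/

/-- The policy playing the fixed action sequence `f`. -/
def Policy.openLoop {O A : Type} [Fintype A] [DecidableEq A] (f : ℕ → A) : Policy O A where
  act l _ a := if a = f l.length then 1 else 0
  act_nonneg _ _ _ := by split_ifs <;> norm_num
  act_sum _ _ := by simp

/-- The actions in the reversed history are those of `f`. -/
def Follows {O A : Type} (f : ℕ → A) : List (O × A) → Prop
  | [] => True
  | x :: r => x.2 = f r.length ∧ Follows f r

namespace LockFrame
variable {L O A : Type} [Fintype O] (F : LockFrame L O A) (Z : LockSecret L A) (G : LockSignal F)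

/-- The final reward, as a function of the reversed history. -/
def lastReward (R : O → ℝ) : List (O × A) → ℝ
  | [] => 0
  | x :: _ => R x.1

/-- Indicator that the lock has not been entered before the last observation. -/
def outsideIndicator : List (O × A) → ℝ
  | [] => 0
  | _ :: r => if (F.position r).isSome then 1 else 0

variable [Fintype A] (π : Policy O A) {R : O → ℝ} {H : ℕ} {u v : ℝ}

/-- The probability that `π` never enters the lock (in time to be noticed). -/
def outside (H : ℕ) : ℝ :=
  pathExp (F.kernel π) H F.outsideIndicator

lemma outside_nonneg (H : ℕ) : 0 ≤ F.outside π H := by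
  refine pathExp_nonneg (F.kernel_nonneg π) fun r => ?_
  rcases r with _ | ⟨x, r⟩
  · exact le_rfl
  · rw [outsideIndicator]
    split_ifs <;> norm_num

lemma sum_kernel_mul_const (r : List (O × A)) (c : ℝ) :
    ∑ x, F.kernel π r.reverse x * c = c := by
  rw [← sum_mul, sum_kernel, one_mul]

lemma pathExp_lastReward (hH : 0 < H) (hout : ∀ y, ∑ o, F.emit (some y) o * R o = u)
    (hin : ∑ o, F.emit none o * R o = v) :
    pathExp (F.kernel π) H (lastReward R) = v + (u - v) * F.outside π H := by
  obtain ⟨T, rfl⟩ := Nat.exists_eq_add_one_of_ne_zero hH.ne'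
  trans pathExp (F.kernel π) (T + 1) fun r => v + (u - v) * F.outsideIndicator r
  swap
  · rw [pathExp_add, pathExp_const (F.sum_kernel π), pathExp_const_mul, outside]
  rw [pathExp_succ, pathExp_succ]
  congr! 2 with r
  simp only [lastReward, outsideIndicator, sum_kernel_mul_const]
  rw [F.sum_kernel_mul_fst π r R]
  rcases F.position r with _ | y
  · simp [hin]
  · simp [hout]

lemma pathExp_likRatio_mul_lastReward_le (hH : 0 < H) (hR : ∀ o, R o ≤ 1)
    (hout : ∀ y, ∑ o, F.emit (some y) o * R o = u) :
    pathExp (F.kernel π) H (fun r => F.likRatio Z G r * lastReward R r) ≤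
      1 + (u - 1) * F.outside π H := by
  obtain ⟨T, rfl⟩ := Nat.exists_eq_add_one_of_ne_zero hH.ne'
  trans pathExp (F.kernel π) (T + 1) fun r =>
    F.likRatio Z G r + (u - 1) * F.outsideIndicator r
  swap
  · rw [pathExp_add, pathExp_likRatio, pathExp_const_mul, outside]
  rw [pathExp_succ, pathExp_succ]
  refine pathExp_mono (F.kernel_nonneg π) fun r _ => ?_
  rcases hp : F.position r with _ | y
  · refine sum_le_sum fun x _ => mul_le_mul_of_nonneg_left ?_ (F.kernel_nonneg π _ _)
    simpa [outsideIndicator, hp, lastReward] using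
      mul_le_of_le_one_right (F.likRatio_nonneg Z G (x :: r)) (hR x.1)
  · have hlik : ∀ x, F.likRatio Z G (x :: r) = 1 := fun x => by
      simp [likRatio, F.consistent_eq_false_of_position Z hp, F.likRatio_eq_one_of_position Z G hp]
    simp only [hlik, outsideIndicator, hp, lastReward, one_mul, sum_kernel_mul_const]
    rw [F.sum_kernel_mul_fst π r R, hp, hout]
    simp

lemma follows_cons_of_kernel_openLoop_ne_zero [DecidableEq A] {f : ℕ → A} {r : List (O × A)}
    {x : O × A} (hr : Follows f r) (hx : F.kernel (Policy.openLoop f) r.reverse x ≠ 0) :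
    Follows f (x :: r) := by
  refine ⟨?_, hr⟩
  by_contra hne
  refine hx ?_
  simp [kernel, Policy.openLoop, hne]

lemma outside_openLoop [DecidableEq A] {f : ℕ → A} (hH : 0 < H)
    (hf : ∀ r : List (O × A), Follows f r → (F.position r).isSome) :
    F.outside (Policy.openLoop f) H = 1 := by
  rw [← pathExp_const (F.sum_kernel (Policy.openLoop f)) H 1]
  refine pathExp_congr_of_invariant (Inv := Follows f) trivial
    (fun r x hr hx => F.follows_cons_of_kernel_openLoop_ne_zero hr hx) fun r hlen hr => ?_
  rcases r with _ | ⟨x, r⟩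
  · exact absurd hlen hH.ne
  · rw [outsideIndicator, if_pos (hf r hr.2)]

lemma pathExp_likRatio_mul_lastReward_openLoop [DecidableEq A] {f : ℕ → A} (hH : 0 < H)
    (hf : ∀ r : List (O × A), r.length + 1 = H → Follows f r → F.consistent Z r)
    (hR : ∀ o, F.emit none o * ((1 + G.val (H - 1) o) * R o) =
      F.emit none o * (1 + G.val (H - 1) o)) :
    pathExp (F.kernel (Policy.openLoop f)) H (fun r => F.likRatio Z G r * lastReward R r) = 1 := by
  obtain ⟨T, rfl⟩ := Nat.exists_eq_add_one_of_ne_zero hH.ne'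
  rw [← F.pathExp_likRatio Z G (Policy.openLoop f) (T + 1), pathExp_succ, pathExp_succ]
  refine pathExp_congr_of_invariant (Inv := Follows f) trivial
    (fun r x hr hx => F.follows_cons_of_kernel_openLoop_ne_zero hr hx) fun r hlen hr =>
      sum_congr rfl fun x _ => ?_
  have hcons := hf r (by rw [hlen]) hr
  have hpos : F.position r = none := by
    by_contra hne
    obtain ⟨y, hy⟩ := Option.ne_none_iff_exists'.1 hne
    rw [F.consistent_eq_false_of_position Z hy] at hcons
    cases hcons
  have hRx := hR x.1
  rw [Nat.add_sub_cancel, ← hlen] at hRx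
  simp only [likRatio, hcons, if_true, lastReward, kernel, List.reverse_reverse, hpos]
  linear_combination
    (Policy.openLoop f).act r.reverse x.1 x.2 * F.likRatio Z G r * hRx

variable {S : Type} [Fintype S] [DecidableEq L]

lemma sum_reward_model (e : S ≃ L ⊕ Bool) (R : O → unitInterval) (η : unitInterval)
    (τ : Fin H → O × A) :
    ∑ h : Fin H, (F.model (H := H) Z G e R η).reward (h + 1) (τ h).1 (τ h).2 =
      lastReward (fun o => (R o : ℝ)) (List.ofFn τ).reverse := by
  rcases H with _ | T
  · simp [lastReward]
  · have hzero : ∀ h : Fin T, (F.model (H := T + 1) Z G e R η).reward (h.castSucc + 1)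
        (τ h.castSucc).1 (τ h.castSucc).2 = 0 := fun h => if_neg (by simp; omega)
    rw [Fin.sum_univ_castSucc, sum_eq_zero fun h _ => hzero h, zero_add,
      ← Fin.snoc_init_self τ, ofFn_snoc, List.reverse_append]
    simp [model, lastReward]

lemma value_model (e : S ≃ L ⊕ Bool) (R : O → unitInterval) (η : unitInterval) :
    (F.model (H := H) Z G e R η).value π =
      (1 - η) * pathExp (F.kernel π) H (lastReward fun o => (R o : ℝ)) +
        η * pathExp (F.kernel π) H fun r =>
          F.likRatio Z G r * lastReward (fun o => (R o : ℝ)) r := by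
  rw [← pathExp_const_mul, ← pathExp_const_mul, ← pathExp_add]
  refine sum_congr rfl fun τ _ => ?_
  rw [trajProb_model, sum_reward_model, mixedRatio]
  ring

end LockFrame

/-! ### Mixtures of likelihood ratios over many episodes -/

section Transcript
variable {X : Type*}

open Classical in
/-- The product of `ℓ` over a list of episodes, stopped when the episodes leave `active`. -/
def stoppedProd (active : Set (List X)) (ℓ : X → ℝ) : List X → ℝ
  | [] => 1
  | x :: r => stoppedProd active ℓ r * if r ∈ active then ℓ x else 1

/-- The lists of episodes whose total cost is at most `m`. -/
def withinBudget (c : X → ℝ) (m : ℝ) : Set (List X) :=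
  {r | (r.map c).sum ≤ m}

variable {active : Set (List X)} {ℓ ℓ' c : X → ℝ}

lemma stoppedProd_eq_prod (hactive : ∀ x r, x :: r ∈ active → r ∈ active) {r : List X}
    (hr : r ∈ active) : stoppedProd active ℓ r = (r.map ℓ).prod := by
  induction r with
  | nil => rfl
  | cons x r ih =>
    have hr' := hactive x r hr
    rw [stoppedProd, if_pos hr', ih hr', List.map_cons, List.prod_cons, mul_comm]

lemma stoppedProd_nonneg (hℓ : ∀ x, 0 ≤ ℓ x) (r : List X) : 0 ≤ stoppedProd active ℓ r := by
  induction r with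
  | nil => exact zero_le_one
  | cons x r ih =>
    refine mul_nonneg ih ?_
    split_ifs
    exacts [hℓ x, zero_le_one]

lemma prod_map_exp_neg (c : X → ℝ) (r : List X) :
    (r.map fun x => Real.exp (-c x)).prod = Real.exp (-(r.map c).sum) := by
  induction r with
  | nil => simp
  | cons x r ih => simp [ih, Real.exp_add, mul_comm]

/-- Stopping exceeds the budget by at most the cost of one episode. -/
lemma exp_neg_le_stoppedProd (hactive : ∀ x r, x :: r ∈ active → r ∈ active) {C : ℝ} (hC : 0 ≤ C)
    (hc : ∀ x, ∀ r ∈ active, ((x :: r).map c).sum ≤ C) (r : List X) :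
    Real.exp (-C) ≤ stoppedProd active (fun x => Real.exp (-c x)) r := by
  induction r with
  | nil => exact Real.exp_le_one_iff.2 (neg_nonpos.2 hC)
  | cons x r ih =>
    rw [stoppedProd]
    split_ifs with hr
    · rw [stoppedProd_eq_prod hactive hr, prod_map_exp_neg, ← Real.exp_add, Real.exp_le_exp,
        ← neg_add, add_comm]
      exact neg_le_neg (hc x r hr)
    · rwa [mul_one]

lemma withinBudget_of_cons (hc : ∀ x, 0 ≤ c x) {m : ℝ} {x : X} {r : List X}
    (h : x :: r ∈ withinBudget c m) : r ∈ withinBudget c m := by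
  have hsum : c x + (r.map c).sum ≤ m := by simpa [withinBudget] using h
  exact (by linarith [hc x] : (r.map c).sum ≤ m)

variable [Fintype X] {p : List X → X → ℝ}

lemma pathExp_prod_map (hℓ : ∀ l, ∑ x, p l x * ℓ x = 1) (T : ℕ) :
    pathExp p T (fun r => (r.map ℓ).prod) = 1 :=
  pathExp_eq_of_martingale T fun r _ => by
    simp only [List.map_cons, List.prod_cons, ← mul_assoc, ← sum_mul, hℓ, one_mul]

lemma pathExp_stoppedProd (hp1 : ∀ l, ∑ x, p l x = 1) (hℓ : ∀ l, ∑ x, p l x * ℓ x = 1) (T : ℕ) :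
    pathExp p T (stoppedProd active ℓ) = 1 := by
  refine pathExp_eq_of_martingale T fun r _ => ?_
  simp only [stoppedProd, mul_left_comm _ (stoppedProd active ℓ r), ← mul_sum]
  split_ifs
  · rw [hℓ, mul_one]
  · simp only [mul_one, hp1]

lemma pathExp_stoppedProd_mul_stoppedProd_le (hp : ∀ l x, 0 ≤ p l x) (hp1 : ∀ l, ∑ x, p l x = 1)
    (hℓ : ∀ x, 0 ≤ ℓ x) (hℓ' : ∀ x, 0 ≤ ℓ' x)
    (hactive : ∀ x r, x :: r ∈ active → r ∈ active) {C : ℝ} (hC : 0 ≤ C)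
    (hc : ∀ x, ∀ r ∈ active, ((x :: r).map c).sum ≤ C)
    (hmoment : ∀ l, ∑ x, p l x * (ℓ x * ℓ' x * Real.exp (-c x)) ≤ 1) (T : ℕ) :
    pathExp p T (fun r => stoppedProd active ℓ r * stoppedProd active ℓ' r) ≤ Real.exp C := by
  set D := stoppedProd active fun x => Real.exp (-c x) with hD
  have hdiscounted : pathExp p T
      (fun r => stoppedProd active ℓ r * stoppedProd active ℓ' r * D r) ≤ 1 := by
    refine (pathExp_le_of_supermartingale hp T fun r _ => ?_).trans_eq (by simp [hD, stoppedProd])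
    have hpos := mul_nonneg (mul_nonneg (stoppedProd_nonneg hℓ r (active := active))
      (stoppedProd_nonneg hℓ' r (active := active)))
      (stoppedProd_nonneg (fun x => (Real.exp_pos (-c x)).le) r (active := active))
    simp only [hD, stoppedProd]
    split_ifs
    · refine le_trans (le_of_eq ?_) (mul_le_of_le_one_right hpos (hmoment r.reverse))
      rw [mul_sum]
      exact sum_congr rfl fun x _ => by ring
    · simp only [mul_one, ← sum_mul, hp1, one_mul, le_refl]
  have hexp : Real.exp C * Real.exp (-C) = 1 := by
    rw [← Real.exp_add, add_neg_cancel, Real.exp_zero]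
  calc pathExp p T (fun r => stoppedProd active ℓ r * stoppedProd active ℓ' r)
      ≤ pathExp p T (fun r =>
          Real.exp C * (stoppedProd active ℓ r * stoppedProd active ℓ' r * D r)) := by
        refine pathExp_mono hp fun r _ => ?_
        rw [mul_left_comm]
        refine le_mul_of_one_le_right
          (mul_nonneg (stoppedProd_nonneg hℓ r) (stoppedProd_nonneg hℓ' r)) ?_
        rw [← hexp]
        exact mul_le_mul_of_nonneg_left (exp_neg_le_stoppedProd hactive hC hc r) (Real.exp_pos C).le
    _ ≤ Real.exp C := by
        rw [pathExp_const_mul]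
        exact mul_le_of_le_one_right (Real.exp_pos C).le hdiscounted

/-- Total variation is at most half the square root of the `χ²` divergence. -/
lemma four_mul_sq_sum_mul_indicator_le {ι : Type*} [Fintype ι] {w D : ι → ℝ} (hw : ∀ i, 0 ≤ w i)
    (hw1 : ∑ i, w i = 1) (hD : ∑ i, w i * D i = 1) (E : Set ι) :
    4 * (∑ i, w i * E.indicator (fun i => 1 - D i) i) ^ 2 ≤ ∑ i, w i * D i ^ 2 - 1 := by
  set s : ι → ℝ := fun i => 2 * E.indicator 1 i - 1 with hs
  have hs2 : ∀ i, s i ^ 2 = 1 := fun i => by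
    by_cases hi : i ∈ E <;> norm_num [hs, hi]
  have hsigned : ∑ i, w i * s i * (1 - D i) =
      2 * ∑ i, w i * E.indicator (fun i => 1 - D i) i := by
    calc _ = ∑ i, (2 * (w i * E.indicator (fun i => 1 - D i) i) - w i + w i * D i) :=
          sum_congr rfl fun i _ => by by_cases hi : i ∈ E <;> simp [hs, hi] <;> ring
      _ = _ := by rw [sum_add_distrib, sum_sub_distrib, ← mul_sum, hw1, hD, sub_add_cancel]
  calc 4 * (∑ i, w i * E.indicator (fun i => 1 - D i) i) ^ 2
      = (∑ i, w i * s i * (1 - D i)) ^ 2 := by rw [hsigned]; ring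
    _ ≤ (∑ i, w i) * ∑ i, w i * (1 - D i) ^ 2 :=
        sum_sq_le_sum_mul_sum_of_sq_le_mul _ (fun i _ => hw i)
          (fun i _ => mul_nonneg (hw i) (sq_nonneg _))
          fun i _ => le_of_eq (by rw [mul_pow, mul_pow, hs2]; ring)
    _ = ∑ i, (w i - 2 * (w i * D i) + w i * D i ^ 2) := by
        rw [hw1, one_mul]
        exact sum_congr rfl fun i _ => by ring
    _ = ∑ i, w i * D i ^ 2 - 1 := by
        rw [sum_add_distrib, sum_sub_distrib, ← mul_sum, hw1, hD]
        ring

/-- A density with second moment at most `3/2` cannot make an event rare, up to leaving `active`. -/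
lemma one_div_fifty_lt_pathExp_indicator_compl (hp : ∀ l x, 0 ≤ p l x)
    (hp1 : ∀ l, ∑ x, p l x = 1) {T : ℕ} {D : List X → ℝ} (hD : pathExp p T D = 1)
    (hD2 : pathExp p T (fun r => D r ^ 2) ≤ 3 / 2) {E : Set (List X)}
    (hE : 3 / 4 ≤ pathExp p T (E.indicator 1))
    (hDE : pathExp p T ((E ∩ active).indicator D) ≤ 1 / 4) :
    1 / 50 < pathExp p T (activeᶜ.indicator 1) := by
  have hsplit : pathExp p T (E.indicator 1) ≤
      pathExp p T ((E ∩ active).indicator fun r => 1 - D r) +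
        pathExp p T ((E ∩ active).indicator D) + pathExp p T (activeᶜ.indicator 1) := by
    rw [← pathExp_add, ← pathExp_add]
    refine pathExp_mono hp fun r _ => ?_
    by_cases h1 : r ∈ E <;> by_cases h2 : r ∈ active <;> simp [h1, h2]
  have hchi : 4 * pathExp p T ((E ∩ active).indicator fun r => 1 - D r) ^ 2 ≤
      pathExp p T (fun r => D r ^ 2) - 1 :=
    four_mul_sq_sum_mul_indicator_le (pathWeight_nonneg hp)
      (by simpa [pathExp] using pathExp_const hp1 T 1) hD
      ((fun τ : Fin T → X => (List.ofFn τ).reverse) ⁻¹' (E ∩ active))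
  nlinarith

/-- If the stopped likelihood ratios of a family have small second moments on average, then an event
cannot be likely under `p` and unlikely under every member, up to leaving `active`. -/
lemma one_div_fifty_lt_of_mixture {ι : Type*} [Fintype ι] [Nonempty ι]
    {ℓ : ι → X → ℝ} {T : ℕ} (hp : ∀ l x, 0 ≤ p l x) (hp1 : ∀ l, ∑ x, p l x = 1)
    (hℓ0 : ∀ u x, 0 ≤ ℓ u x) (hℓ1 : ∀ u l, ∑ x, p l x * ℓ u x = 1)
    (hactive : ∀ x r, x :: r ∈ active → r ∈ active)
    (hmoment : ∑ u, ∑ v, pathExp p T (fun r => stoppedProd active (ℓ u) r *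
      stoppedProd active (ℓ v) r) ≤ 3 / 2 * (Fintype.card ι : ℝ) ^ 2)
    {E : Set (List X)} (hE : 3 / 4 ≤ pathExp p T (E.indicator 1))
    (hEℓ : ∀ u, pathExp p T (E.indicator fun r => (r.map (ℓ u)).prod) ≤ 1 / 4) :
    1 / 50 < pathExp p T (activeᶜ.indicator 1) := by
  set n : ℝ := (Fintype.card ι : ℝ)
  have hn : 0 < n := by positivity
  set D : List X → ℝ := fun r => n⁻¹ * ∑ u, stoppedProd active (ℓ u) r with hDdef
  have hD : pathExp p T D = 1 := by
    simp only [hDdef, pathExp_const_mul, pathExp_sum, pathExp_stoppedProd hp1 (hℓ1 _)]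
    simp [n, hn.ne']
  have hD2 : pathExp p T (fun r => D r ^ 2) ≤ 3 / 2 := by
    have hsq : (fun r => D r ^ 2) = fun r => (n ^ 2)⁻¹ *
        ∑ u, ∑ v, stoppedProd active (ℓ u) r * stoppedProd active (ℓ v) r := by
      ext r
      rw [hDdef, mul_pow, inv_pow, sq (∑ u, _), sum_mul_sum]
    simp only [hsq, pathExp_const_mul, pathExp_sum]
    rwa [inv_mul_le_iff₀ (by positivity), mul_comm]
  refine one_div_fifty_lt_pathExp_indicator_compl hp hp1 hD hD2 hE ?_
  calc pathExp p T ((E ∩ active).indicator D)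
      ≤ pathExp p T (fun r => n⁻¹ * ∑ u, E.indicator (fun r => (r.map (ℓ u)).prod) r) := by
        refine pathExp_mono hp fun r _ => Set.indicator_apply_le' (fun hr => ?_) fun _ => ?_
        · simp only [hDdef, Set.indicator_of_mem hr.1, stoppedProd_eq_prod hactive hr.2, le_refl]
        · refine mul_nonneg (inv_nonneg.2 hn.le) (sum_nonneg fun u _ => ?_)
          exact Set.indicator_nonneg (fun r _ => List.prod_nonneg (by simp [hℓ0])) r
    _ ≤ n⁻¹ * ∑ u : ι, 1 / 4 := by
        rw [pathExp_const_mul, pathExp_sum]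
        exact mul_le_mul_of_nonneg_left (sum_le_sum fun u _ => hEℓ u) (inv_nonneg.2 hn.le)
    _ = 1 / 4 := by simp [n, hn.ne']

/-- Markov's inequality for budgets, averaged over a family of costs. -/
lemma sum_pathExp_indicator_compl_withinBudget_le {ι : Type*} [Fintype ι] (hp : ∀ l x, 0 ≤ p l x)
    (hp1 : ∀ l, ∑ x, p l x = 1) {c : ι → X → ℝ} (hc : ∀ θ x, 0 ≤ c θ x) {K m : ℝ}
    (hK : ∀ x, ∑ θ, c θ x ≤ K) (hm : 0 < m) (T : ℕ) :
    ∑ θ, pathExp p T ((withinBudget (c θ) m)ᶜ.indicator 1) ≤ T * K / m := by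
  have hmarkov : ∀ θ r, (withinBudget (c θ) m)ᶜ.indicator 1 r ≤ m⁻¹ * (r.map (c θ)).sum := by
    intro θ
    refine Set.indicator_le' (fun r hr => ?_) fun r _ => ?_
    · rw [withinBudget, Set.mem_compl_iff, Set.mem_ofPred_eq, not_le] at hr
      rw [Pi.one_apply, ← inv_mul_cancel₀ hm.ne']
      exact mul_le_mul_of_nonneg_left hr.le (inv_nonneg.2 hm.le)
    · exact mul_nonneg (inv_nonneg.2 hm.le) (List.sum_nonneg (by simp [hc]))
  have htotal : ∀ r : List X, ∑ θ, (r.map (c θ)).sum ≤ r.length * K := by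
    intro r
    induction r with
    | nil => simp
    | cons x r ih =>
      simp only [List.map_cons, List.sum_cons, sum_add_distrib, List.length_cons, Nat.cast_add_one]
      linarith [hK x]
  calc ∑ θ, pathExp p T ((withinBudget (c θ) m)ᶜ.indicator 1)
      = pathExp p T fun r => ∑ θ, (withinBudget (c θ) m)ᶜ.indicator 1 r := (pathExp_sum _ _).symm
    _ ≤ pathExp p T fun _ => T * K / m := by
        refine pathExp_mono hp fun r hr => (sum_le_sum fun θ _ => hmarkov θ r).trans ?_
        rw [← mul_sum, ← hr, div_eq_inv_mul]
        exact mul_le_mul_of_nonneg_left (htotal r) (inv_nonneg.2 hm.le)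
    _ = T * K / m := pathExp_const hp1 T _

lemma exists_pathExp_indicator_compl_le {ι : Type*} [Fintype ι] [Nonempty ι]
    (hp : ∀ l x, 0 ≤ p l x) (hp1 : ∀ l, ∑ x, p l x = 1) {c c' : ι → X → ℝ}
    (hc : ∀ θ x, 0 ≤ c θ x) (hc' : ∀ θ x, 0 ≤ c' θ x) {K K' m m' : ℝ}
    (hK : ∀ x, ∑ θ, c θ x ≤ Fintype.card ι * K) (hK' : ∀ x, ∑ θ, c' θ x ≤ Fintype.card ι * K')
    (hm : 0 < m) (hm' : 0 < m') (T : ℕ) :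
    ∃ θ, pathExp p T ((withinBudget (c θ) m ∩ withinBudget (c' θ) m')ᶜ.indicator 1) ≤
      T * K / m + T * K' / m' := by
  have hunion : ∀ θ, pathExp p T ((withinBudget (c θ) m ∩ withinBudget (c' θ) m')ᶜ.indicator 1) ≤
      pathExp p T ((withinBudget (c θ) m)ᶜ.indicator 1) +
        pathExp p T ((withinBudget (c' θ) m')ᶜ.indicator 1) := by
    intro θ
    rw [← pathExp_add]
    refine pathExp_mono hp fun r _ => ?_
    by_cases h1 : r ∈ withinBudget (c θ) m <;> by_cases h2 : r ∈ withinBudget (c' θ) m' <;>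
      simp [h1, h2]
  obtain ⟨θ, -, hθ⟩ := exists_le_of_sum_le (s := univ) univ_nonempty (g := fun _ : ι =>
      T * K / m + T * K' / m') <| calc
    ∑ θ, pathExp p T ((withinBudget (c θ) m ∩ withinBudget (c' θ) m')ᶜ.indicator 1)
      ≤ T * (Fintype.card ι * K) / m + T * (Fintype.card ι * K') / m' := by
        refine (sum_le_sum fun θ _ => hunion θ).trans ?_
        rw [sum_add_distrib]
        exact add_le_add (sum_pathExp_indicator_compl_withinBudget_le hp hp1 hc hK hm T)
          (sum_pathExp_indicator_compl_withinBudget_le hp hp1 hc' hK' hm' T)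
    _ = ∑ _θ : ι, (T * K / m + T * K' / m') := by
        rw [sum_const, card_univ, nsmul_eq_mul]
        ring
  exact ⟨θ, hθ⟩

end Transcript

/-! ### The hard instances -/

/-- The sign `±1` encoded by a Boolean. -/
def sgn (b : Bool) : ℝ := if b then 1 else -1

lemma abs_sgn (b : Bool) : |sgn b| = 1 := by cases b <;> simp [sgn]

/-- The parameters of the hard instances. The states outside the lock are the leaves of a binary
tree of depth `depth`, the lock can be entered at `window` times after the tree, and the
observations inside the lock are `pairs` pairs. `state` and `obs` name the states and observations,
and `wait` is the action that does nothing. -/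
structure LockDesign (S O A : Type) (H : ℕ) where
  depth : ℕ
  pairs : ℕ
  window : ℕ
  pairs_pos : 0 < pairs
  window_pos : 0 < window
  lt_horizon : depth + window < H
  state : S ≃ (Fin depth → Bool) ⊕ Bool
  obs : O ≃ (Fin depth → Bool) ⊕ (Fin pairs × Bool)
  wait : A
  α : ℝ
  α_pos : 0 < α
  α_le : 5 * H * α ≤ 1
  ε : ℝ
  ε_pos : 0 < ε
  ε_le : ε ≤ 1 / 100

namespace LockDesign
variable {S O A : Type} {H : ℕ} (P : LockDesign S O A H)

/-- The leaves of the tree. A node at depth `t` is represented by its leftmost leaf. -/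
abbrev Leaf : Type := Fin P.depth → Bool

/-- The sign patterns that the lock hides. -/
abbrev Signs : Type := Fin P.pairs → Bool

/-- A key of the lock: the leaf, the time (after the tree) and the action of the secret entry, and
the code to be followed inside the lock. -/
abbrev Key : Type := P.Leaf × Fin P.window × {a : A // a ≠ P.wait} × (Fin H → A)

lemma pairs_ne_zero : (P.pairs : ℝ) ≠ 0 := Nat.cast_ne_zero.2 P.pairs_pos.ne'

lemma horizon_pos (P : LockDesign S O A H) : 0 < H := by
  have := P.lt_horizon
  omega

lemma three_mul_α_le_one : 3 * P.α ≤ 1 := by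
  have hH : (1 : ℝ) ≤ H := Nat.one_le_cast.2 P.horizon_pos
  nlinarith [P.α_le, P.α_pos]

/-- The emission law outside the good lock state: a leaf is observed exactly, and the bad lock state
emits a uniform signed pair. -/
def emission : Option P.Leaf → P.Leaf ⊕ (Fin P.pairs × Bool) → ℝ
  | some x, Sum.inl y => if x = y then 1 else 0
  | none, Sum.inr _ => 1 / (2 * P.pairs)
  | _, _ => 0

/-- The strength of the signal at time `t`: weak before the last time, and full at the last time. -/
def amplitude (t : ℕ) : ℝ := if t + 1 = H then 1 else 3 * P.α

/-- The sign pattern of the signal at time `t`: secret before the last time, and trivial at the last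
time. -/
def pattern (μ : P.Signs) (t : ℕ) (i : Fin P.pairs) : ℝ := if t + 1 = H then 1 else sgn (μ i)

/-- The relative deviation of the emission law in the good lock state. -/
def deviation (μ : P.Signs) (t : ℕ) : P.Leaf ⊕ (Fin P.pairs × Bool) → ℝ
  | Sum.inl _ => 0
  | Sum.inr (i, s) => P.amplitude t * (P.pattern μ t i * sgn s)

/-- The reward at the last step: `1 / 2 + 4 * ε` outside the lock, and the sign inside. -/
def reward : P.Leaf ⊕ (Fin P.pairs × Bool) → unitInterval
  | Sum.inl _ => ⟨1 / 2 + 4 * P.ε, by linarith [P.ε_pos], by linarith [P.ε_le]⟩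
  | Sum.inr (_, s) => if s then 1 else 0

lemma amplitude_pos (t : ℕ) : 0 < P.amplitude t := by
  unfold amplitude
  split_ifs
  exacts [one_pos, by linarith [P.α_pos]]

lemma three_mul_α_le_amplitude (t : ℕ) : 3 * P.α ≤ P.amplitude t := by
  unfold amplitude
  split_ifs
  exacts [P.three_mul_α_le_one, le_rfl]

lemma abs_pattern (μ : P.Signs) (t : ℕ) (i : Fin P.pairs) : |P.pattern μ t i| = 1 := by
  unfold pattern
  split_ifs
  exacts [abs_one, abs_sgn _]

lemma abs_deviation_le (μ : P.Signs) (t : ℕ) (o : P.Leaf ⊕ (Fin P.pairs × Bool)) :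
    |P.deviation μ t o| ≤ P.amplitude t := by
  rcases o with y | ⟨i, s⟩
  · rw [deviation, abs_zero]
    exact (P.amplitude_pos t).le
  · rw [deviation, abs_mul, abs_mul, abs_pattern, abs_sgn, abs_of_pos (P.amplitude_pos t), one_mul,
      mul_one]

variable [Fintype O]

lemma sum_emission_none_mul (g : P.Leaf ⊕ (Fin P.pairs × Bool) → ℝ) :
    ∑ o, P.emission none (P.obs o) * g (P.obs o) =
      1 / (2 * P.pairs) * ∑ i, (g (Sum.inr (i, true)) + g (Sum.inr (i, false))) := by
  rw [P.obs.sum_comp fun o => P.emission none o * g o, Fintype.sum_sum_type]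
  simp [emission, mul_sum, Fintype.sum_prod_type, mul_add]

lemma sum_emission_some_mul (x : P.Leaf) (g : P.Leaf ⊕ (Fin P.pairs × Bool) → ℝ) :
    ∑ o, P.emission (some x) (P.obs o) * g (P.obs o) = g (Sum.inl x) := by
  rw [P.obs.sum_comp fun o => P.emission (some x) o * g o, Fintype.sum_sum_type]
  simp [emission]

lemma sum_emission (z : Option P.Leaf) : ∑ o, P.emission z (P.obs o) = 1 := by
  rcases z with _ | x
  · have h := P.sum_emission_none_mul fun _ => 1
    simp only [mul_one] at h
    have := P.pairs_ne_zero
    rw [h, sum_const, card_univ, Fintype.card_fin, nsmul_eq_mul]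
    field_simp
    norm_num
  · simpa using P.sum_emission_some_mul x fun _ => 1

lemma sum_emission_none_mul_deviation (μ : P.Signs) (t : ℕ) :
    ∑ o, P.emission none (P.obs o) * P.deviation μ t (P.obs o) = 0 := by
  rw [sum_emission_none_mul]
  simp [deviation, sgn]

lemma sum_emission_none_mul_deviation_mul_deviation (μ ν : P.Signs) (t : ℕ) :
    ∑ o, P.emission none (P.obs o) * (P.deviation μ t (P.obs o) * P.deviation ν t (P.obs o)) =
      P.amplitude t ^ 2 * (1 / P.pairs * ∑ i, P.pattern μ t i * P.pattern ν t i) := by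
  rw [P.sum_emission_none_mul fun o => P.deviation μ t o * P.deviation ν t o]
  simp only [mul_sum]
  refine sum_congr rfl fun i _ => ?_
  simp only [deviation, sgn, Bool.false_eq_true, if_true, if_false]
  field_simp
  ring

variable [DecidableEq A]

/-- The frame of the hard instances: in the tree an action different from `wait` goes right, after
the tree it enters the lock. -/
def frame : LockFrame P.Leaf O A where
  start _ := false
  move t x a :=
    if h : t < P.depth then some (if a = P.wait then x else Function.update x ⟨t, h⟩ true)
    else if a = P.wait then some x else none
  emit z o := P.emission z (P.obs o)
  emit_nonneg z o := by
    unfold emission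
    split <;> positivity
  emit_sum := P.sum_emission

/-- The signal of the hard instances. -/
def signal (μ : P.Signs) : LockSignal P.frame where
  val t o := P.deviation μ t (P.obs o)
  neg_one_le t o := by
    have hle : P.amplitude t ≤ 1 := by
      unfold amplitude
      split_ifs
      exacts [le_rfl, P.three_mul_α_le_one]
    exact neg_le_of_abs_le ((P.abs_deviation_le μ t _).trans hle)
  mean_zero := P.sum_emission_none_mul_deviation μ

/-- The secret encoded by a key. -/
def secret (θ : P.Key) : LockSecret P.Leaf A where
  hit t x a := decide (x = θ.1 ∧ t = P.depth + θ.2.1 ∧ a = θ.2.2.1)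
  stay t a := decide (∀ h : t < H, θ.2.2.2 ⟨t, h⟩ = a)

/-- The action sequence that opens the lock with key `θ`. -/
def opening (θ : P.Key) (t : ℕ) : A :=
  if h : t < P.depth then if θ.1 ⟨t, h⟩ then θ.2.2.1 else P.wait
  else if t < P.depth + θ.2.1 then P.wait
  else if t = P.depth + θ.2.1 then θ.2.2.1
  else if h : t < H then θ.2.2.2 ⟨t, h⟩ else P.wait

lemma frame_move_of_lt {t : ℕ} (ht : t < P.depth) (x : P.Leaf) (a : A) :
    P.frame.move t x a = some (if a = P.wait then x else Function.update x ⟨t, ht⟩ true) :=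
  dif_pos ht

lemma frame_move_of_le {t : ℕ} (ht : P.depth ≤ t) (x : P.Leaf) (a : A) :
    P.frame.move t x a = if a = P.wait then some x else none :=
  dif_neg ht.not_gt

lemma isSome_position_of_follows_wait (r : List (O × A)) (hr : Follows (fun _ => P.wait) r) :
    (P.frame.position r).isSome := by
  induction r with
  | nil => rfl
  | cons x r ih =>
    obtain ⟨y, hy⟩ := Option.isSome_iff_exists.1 (ih hr.2)
    rw [LockFrame.position, hy, hr.1, Option.bind_some]
    rcases lt_or_ge r.length P.depth with hd | hd
    · rw [P.frame_move_of_lt hd, Option.isSome_some]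
    · rw [P.frame_move_of_le hd, if_pos rfl, Option.isSome_some]

lemma position_of_follows_opening (θ : P.Key) (r : List (O × A)) (hr : Follows (P.opening θ) r)
    (hlen : r.length ≤ P.depth + θ.2.1) :
    P.frame.position r = some fun i : Fin P.depth => decide (i < r.length) && θ.1 i := by
  induction r with
  | nil => simp [LockFrame.position, frame]
  | cons x r ih =>
    rw [List.length_cons] at hlen
    rw [LockFrame.position, ih hr.2 (by omega), Option.bind_some, hr.1, List.length_cons]
    rcases lt_or_ge r.length P.depth with hd | hd
    · rw [P.frame_move_of_lt hd, opening, dif_pos hd]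
      congr 1
      ext i
      rcases eq_or_ne i ⟨r.length, hd⟩ with rfl | hi
      · cases hb : θ.1 ⟨r.length, hd⟩ <;> simp [θ.2.2.1.2]
      · have hne : (i : ℕ) ≠ r.length := fun h => hi (Fin.ext h)
        have hiff : (i : ℕ) < r.length ↔ (i : ℕ) < r.length + 1 := by omega
        split_ifs <;> simp [hi, hiff]
    · rw [P.frame_move_of_le hd, opening, dif_neg hd.not_gt, if_pos (show
        r.length < _ by omega), if_pos rfl]
      congr 1
      ext i
      simp [show (i : ℕ) < r.length by omega, show (i : ℕ) < r.length + 1 by omega]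

lemma consistent_of_follows_opening (θ : P.Key) (r : List (O × A)) (hr : Follows (P.opening θ) r)
    (hlen : P.depth + θ.2.1 < r.length) : P.frame.consistent (P.secret θ) r := by
  induction r with
  | nil => simp at hlen
  | cons x r ih =>
    rw [List.length_cons, Nat.lt_succ_iff_lt_or_eq] at hlen
    rcases hlen with hlt | heq
    · have hcons := ih hr.2 hlt
      have hpos : P.frame.position r = none := by
        by_contra hne
        obtain ⟨y, hy⟩ := Option.ne_none_iff_exists'.1 hne
        simp [LockFrame.consistent_eq_false_of_position _ _ hy] at hcons
      have hopen : ∀ h : r.length < H, θ.2.2.2 ⟨r.length, h⟩ = x.2 := fun h => by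
        rw [hr.1, opening, dif_neg (by omega), if_neg (by omega), if_neg (by omega), dif_pos h]
      rw [LockFrame.consistent_cons_of_none _ _ hpos, hcons]
      exact decide_eq_true hopen
    · have hx : x.2 = θ.2.2.1 := by
        rw [hr.1, opening, dif_neg (by omega), if_neg (by omega), if_pos heq.symm]
      have hleaf : (fun i : Fin P.depth => decide (i < r.length) && θ.1 i) = θ.1 := by
        ext i
        simp [show (i : ℕ) < r.length by omega]
      have hpos := P.position_of_follows_opening θ r hr.2 heq.ge
      rw [hleaf] at hpos
      have hmove := P.frame_move_of_le (show P.depth ≤ r.length by omega) θ.1 x.2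
      rw [hx, if_neg θ.2.2.1.2] at hmove
      rw [LockFrame.consistent_cons_of_some _ _ hpos, hx, hmove]
      exact decide_eq_true ⟨rfl, heq.symm, rfl⟩

end LockDesign

/-! ### Counting consistent keys -/

/-- The weight of the times before the last one. -/
def earlyWeight (H t : ℕ) : ℝ := if t + 1 < H then 1 else 0

/-- The weight of the last time. -/
def lastWeight (H t : ℕ) : ℝ := if t + 1 = H then 1 else 0

lemma earlyWeight_nonneg (H t : ℕ) : 0 ≤ earlyWeight H t := by
  unfold earlyWeight
  split_ifs <;> norm_num

lemma earlyWeight_le_one (H t : ℕ) : earlyWeight H t ≤ 1 := by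
  unfold earlyWeight
  split_ifs <;> norm_num

lemma lastWeight_nonneg (H t : ℕ) : 0 ≤ lastWeight H t := by
  unfold lastWeight
  split_ifs <;> norm_num

namespace LockDesign
variable {S O A : Type} {H : ℕ} (P : LockDesign S O A H) [Fintype O] [DecidableEq A]

/-- Changing the code at a time not yet reached does not affect consistency. -/
lemma consistent_secret_update (θ : P.Key) {r : List (O × A)} {t : Fin H} (ht : r.length ≤ t)
    (a : A) : P.frame.consistent (P.secret (θ.1, θ.2.1, θ.2.2.1, Function.update θ.2.2.2 t a)) r =
      P.frame.consistent (P.secret θ) r := by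
  induction r with
  | nil => rfl
  | cons x r ih =>
    rw [List.length_cons] at ht
    rcases hp : P.frame.position r with _ | y
    · rw [LockFrame.consistent_cons_of_none _ _ hp, LockFrame.consistent_cons_of_none _ _ hp,
        ih (by omega)]
      simp only [secret]
      congr 2
      refine forall_congr fun h => ?_
      rw [Function.update_of_ne fun heq => by rw [← heq] at ht; simp at ht]
    · rw [LockFrame.consistent_cons_of_some _ _ hp, LockFrame.consistent_cons_of_some _ _ hp]
      rfl

variable [Fintype A]

/-- The keys consistent with a reversed history. -/
def consistentKeys (r : List (O × A)) : Finset P.Key :=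
  {θ | P.frame.consistent (P.secret θ) r}

variable {P}

lemma mem_consistentKeys {θ : P.Key} {r : List (O × A)} :
    θ ∈ P.consistentKeys r ↔ P.frame.consistent (P.secret θ) r := by
  simp [consistentKeys]

lemma mem_consistentKeys_cons_of_none {r : List (O × A)} (hp : P.frame.position r = none)
    {θ : P.Key} {x : O × A} : θ ∈ P.consistentKeys (x :: r) ↔
      θ ∈ P.consistentKeys r ∧ ∀ h : r.length < H, θ.2.2.2 ⟨r.length, h⟩ = x.2 := by
  simp [mem_consistentKeys, LockFrame.consistent_cons_of_none _ _ hp, secret]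

lemma eq_of_mem_consistentKeys_cons_of_some {r : List (O × A)} {y : P.Leaf}
    (hp : P.frame.position r = some y) {θ : P.Key} {x : O × A}
    (hθ : θ ∈ P.consistentKeys (x :: r)) :
    y = θ.1 ∧ r.length = P.depth + θ.2.1 ∧ x.2 = θ.2.2.1 := by
  rw [mem_consistentKeys, LockFrame.consistent_cons_of_some _ _ hp, Bool.and_eq_true] at hθ
  exact of_decide_eq_true hθ.2

lemma consistentKeys_nil : P.consistentKeys [] = ∅ := by
  simp [consistentKeys, LockFrame.consistent]

lemma consistentKeys_eq_empty_of_position {r : List (O × A)} {y : P.Leaf}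
    (hp : P.frame.position r = some y) : P.consistentKeys r = ∅ := by
  simp [consistentKeys, LockFrame.consistent_eq_false_of_position _ _ hp]

/-- Entering the lock determines the leaf, the time and the action of the key. -/
lemma card_consistentKeys_cons_le_of_some {r : List (O × A)} {y : P.Leaf}
    (hp : P.frame.position r = some y) (x : O × A) :
    #(P.consistentKeys (x :: r)) ≤ Fintype.card A ^ H := by
  have hcodes : Fintype.card A ^ H = #(univ : Finset (Fin H → A)) := by simp
  rw [hcodes]
  refine card_le_card_of_injOn (fun θ => θ.2.2.2) (fun _ _ => mem_univ _) ?_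
  intro θ hθ θ' hθ' hcode
  obtain ⟨hleaf, htime, hact⟩ := eq_of_mem_consistentKeys_cons_of_some hp hθ
  obtain ⟨hleaf', htime', hact'⟩ := eq_of_mem_consistentKeys_cons_of_some hp hθ'
  exact Prod.ext (hleaf ▸ hleaf') (Prod.ext (Fin.ext (by omega))
    (Prod.ext (Subtype.ext (hact ▸ hact')) hcode))

lemma consistentKeys_cons_eq_empty_of_some {r : List (O × A)} {y : P.Leaf}
    (hp : P.frame.position r = some y) (x : O × A) (hr : P.depth + P.window ≤ r.length) :
    P.consistentKeys (x :: r) = ∅ := by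
  refine eq_empty_of_forall_notMem fun θ hθ => ?_
  have := (eq_of_mem_consistentKeys_cons_of_some hp hθ).2.1
  omega

/-- Every step inside the lock reveals one letter of the code. -/
lemma card_consistentKeys_cons_mul_le_of_none {r : List (O × A)}
    (hp : P.frame.position r = none) (x : O × A) (hr : r.length < H) :
    #(P.consistentKeys (x :: r)) * Fintype.card A ≤ #(P.consistentKeys r) := by
  rw [← card_univ, ← card_product]
  refine card_le_card_of_injOn (fun p => (p.1.1, p.1.2.1, p.1.2.2.1,
    Function.update p.1.2.2.2 ⟨r.length, hr⟩ p.2)) ?_ ?_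
  · rintro ⟨θ, a⟩ hθ
    have hmem := ((mem_consistentKeys_cons_of_none hp).1 (mem_product.1 hθ).1).1
    rwa [mem_coe, mem_consistentKeys, consistent_secret_update _ θ (t := ⟨r.length, hr⟩) le_rfl,
      ← mem_consistentKeys]
  · rintro ⟨θ, a⟩ hθ ⟨θ', a'⟩ hθ' heq
    have hlast := ((mem_consistentKeys_cons_of_none hp).1 (mem_product.1 hθ).1).2 hr
    have hlast' := ((mem_consistentKeys_cons_of_none hp).1 (mem_product.1 hθ').1).2 hr
    simp only [Prod.mk.injEq] at heq
    obtain ⟨hleaf, htime, hact, hcode⟩ := heq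
    have ha : a = a' := by simpa using congrFun hcode ⟨r.length, hr⟩
    refine Prod.ext (Prod.ext hleaf (Prod.ext htime (Prod.ext hact (funext fun i => ?_)))) ha
    by_cases hi : i = ⟨r.length, hr⟩
    · rw [hi, hlast, hlast']
    · simpa [hi] using congrFun hcode i

lemma sum_exposure_cons (w : ℕ → ℝ) (x : O × A) (r : List (O × A)) :
    ∑ θ : P.Key, P.frame.exposure (P.secret θ) w (x :: r) =
      ∑ θ : P.Key, P.frame.exposure (P.secret θ) w r + #(P.consistentKeys r) * w r.length := by
  simp only [LockFrame.exposure, sum_add_distrib, consistentKeys]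
  rw [← sum_filter, sum_const, nsmul_eq_mul]

lemma sum_exposure_eq_zero_of_position (w : ℕ → ℝ) {r : List (O × A)} {y : P.Leaf}
    (hp : P.frame.position r = some y) :
    ∑ θ : P.Key, P.frame.exposure (P.secret θ) w r = 0 :=
  sum_eq_zero fun _ _ => P.frame.exposure_eq_zero_of_position _ w hp

/-- The number of consistent keys is a potential: inside the lock it shrinks by a factor of at
least `3` at every step, which pays for the exposure. -/
lemma sum_exposure_add_card_le (hA : 3 ≤ Fintype.card A) {w : ℕ → ℝ} (hw : ∀ t, w t ≤ 1)
    {r : List (O × A)} (hr : r.length ≤ H) :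
    ∑ θ : P.Key, P.frame.exposure (P.secret θ) w r + 3 / 2 * #(P.consistentKeys r) ≤
      3 / 2 * (Fintype.card A : ℝ) ^ H := by
  induction r with
  | nil => simp [LockFrame.exposure, consistentKeys_nil]
  | cons x r ih =>
    rw [List.length_cons] at hr
    have hih := ih (by omega)
    rw [sum_exposure_cons]
    rcases hp : P.frame.position r with _ | y
    · have hshrink : (#(P.consistentKeys (x :: r)) : ℝ) * Fintype.card A ≤
          #(P.consistentKeys r) := by
        exact_mod_cast card_consistentKeys_cons_mul_le_of_none hp x hr
      have hA' : (3 : ℝ) ≤ Fintype.card A := by exact_mod_cast hA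
      have hpay := mul_le_mul_of_nonneg_left (hw r.length)
        (Nat.cast_nonneg (α := ℝ) #(P.consistentKeys r))
      have hthree := mul_le_mul_of_nonneg_left hA'
        (Nat.cast_nonneg (α := ℝ) #(P.consistentKeys (x :: r)))
      linarith
    · rw [sum_exposure_eq_zero_of_position w hp, consistentKeys_eq_empty_of_position hp]
      have hentry : (#(P.consistentKeys (x :: r)) : ℝ) ≤ (Fintype.card A : ℝ) ^ H := by
        exact_mod_cast card_consistentKeys_cons_le_of_some hp x
      simp only [card_empty, Nat.cast_zero, zero_mul, add_zero, zero_add]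
      linarith

lemma sum_exposure_le (hA : 3 ≤ Fintype.card A) {w : ℕ → ℝ} (hw : ∀ t, w t ≤ 1)
    {r : List (O × A)} (hr : r.length ≤ H) :
    ∑ θ : P.Key, P.frame.exposure (P.secret θ) w r ≤ 3 / 2 * (Fintype.card A : ℝ) ^ H :=
  (le_add_of_nonneg_right (by positivity)).trans (sum_exposure_add_card_le hA hw hr)

lemma card_consistentKeys_mul_pow_le {r : List (O × A)} (hr : r.length ≤ H) :
    #(P.consistentKeys r) * Fintype.card A ^ r.length ≤
      Fintype.card A ^ H * Fintype.card A ^ (P.depth + P.window) := by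
  have hA : 0 < Fintype.card A := Fintype.card_pos_iff.2 ⟨P.wait⟩
  induction r with
  | nil => simp [consistentKeys_nil]
  | cons x r ih =>
    rw [List.length_cons] at hr ⊢
    rcases hp : P.frame.position r with _ | y
    · calc _ = #(P.consistentKeys (x :: r)) * Fintype.card A * Fintype.card A ^ r.length := by
            rw [pow_succ]; ring
        _ ≤ #(P.consistentKeys r) * Fintype.card A ^ r.length :=
            Nat.mul_le_mul_right _ (card_consistentKeys_cons_mul_le_of_none hp x hr)
        _ ≤ _ := ih (by omega)
    · rcases Nat.lt_or_ge r.length (P.depth + P.window) with hlt | hge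
      · exact Nat.mul_le_mul (card_consistentKeys_cons_le_of_some hp x)
          (Nat.pow_le_pow_right hA hlt)
      · simp [consistentKeys_cons_eq_empty_of_some hp x hge]

lemma sum_exposure_lastWeight_mul_pow_le {r : List (O × A)} (hr : r.length = H) :
    (∑ θ : P.Key, P.frame.exposure (P.secret θ) (lastWeight H) r) *
      (Fintype.card A : ℝ) ^ (H - 1) ≤
        (Fintype.card A : ℝ) ^ H * (Fintype.card A : ℝ) ^ (P.depth + P.window) := by
  rcases r with _ | ⟨x, r⟩
  · exact absurd hr P.horizon_pos.ne
  rw [List.length_cons] at hr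
  have hbefore : ∀ t < r.length, lastWeight H t = 0 := fun t ht => if_neg (by omega)
  rw [sum_exposure_cons, sum_eq_zero fun θ _ => P.frame.exposure_eq_zero_of_weight _ hbefore,
    zero_add, lastWeight, if_pos hr, mul_one, show H - 1 = r.length by omega]
  exact_mod_cast card_consistentKeys_mul_pow_le (by omega : r.length ≤ H)

end LockDesign

/-! ### Revealing left inverses -/

lemma opNormStarOne_le {S ι κ : Type} [Fintype S] [Fintype ι] [Fintype κ] [Unique κ]
    (B : Matrix S (ι × κ) ℝ) {K : ℝ} (hK : 0 ≤ K) (hB : ∀ i, ∑ s, |B s i| ≤ K) :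
    opNormStarOne B ≤ K := by
  refine Real.sSup_le ?_ hK
  rintro _ ⟨x, hx, rfl⟩
  have hx1 : ∑ i, |x i| ≤ 1 := by
    rw [starNorm, Fintype.sum_unique, Real.sqrt_sq (by positivity)] at hx
    rwa [Fintype.sum_prod_type, sum_congr rfl fun i _ => Fintype.sum_unique _]
  calc ∑ s, |B.mulVec x s| ≤ ∑ s, ∑ i, |B s i| * |x i| := by
        refine sum_le_sum fun s _ => (abs_sum_le_sum_abs _ _).trans ?_
        exact (sum_congr rfl fun i _ => abs_mul _ _).le
    _ = ∑ i, (∑ s, |B s i|) * |x i| := by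
        rw [sum_comm]
        simp only [sum_mul]
    _ ≤ ∑ i, K * |x i| :=
        sum_le_sum fun i _ => mul_le_mul_of_nonneg_right (hB i) (abs_nonneg _)
    _ = K * ∑ i, |x i| := by rw [mul_sum]
    _ ≤ K := mul_le_of_le_one_right hK hx1

lemma POMDP.isRevealing_one_of_leftInverse {S O A : Type} [Fintype S] [Fintype O] [Fintype A]
    [DecidableEq S] {H : ℕ} (M : POMDP S O A H) {α : ℝ} (hα : 0 < α) (B : ℕ → O → S → ℝ)
    (hB : ∀ h s s', ∑ o, B h o s * M.emit h s' o = if s = s' then 1 else 0)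
    (hBα : ∀ h o, ∑ s, |B h o s| ≤ 1 / α) : M.IsRevealing 1 α := by
  intro h _
  have : IsEmpty (Fin (1 - 1)) := inferInstanceAs (IsEmpty (Fin 0))
  refine ⟨Matrix.of fun s p => B h (p.1 0) s, fun c _ => ?_,
    opNormStarOne_le _ (by positivity) fun p => hBα h (p.1 0)⟩
  have hinv : (Matrix.of fun s (p : (Fin 1 → O) × (Fin (1 - 1) → A)) => B h (p.1 0) s) *
      M.emitActMatrix h 1 = 1 := by
    ext s s'
    rw [Matrix.mul_apply, Fintype.sum_prod_type, sum_congr rfl fun i _ => Fintype.sum_unique _,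
      Matrix.one_apply, ← hB h s s']
    exact (Equiv.funUnique (Fin 1) O).sum_comp fun o => B h o s * M.emit h s' o
  rw [hinv, Matrix.one_mulVec]

namespace LockDesign
variable {S O A : Type} {H : ℕ} (P : LockDesign S O A H)

/-- The left inverse of the emission matrix at time `t`: the good lock state is estimated by the
observed sign times the sign pattern, rescaled by the amplitude. -/
def leftInverse (μ : P.Signs) (t : ℕ) :
    P.Leaf ⊕ (Fin P.pairs × Bool) → P.Leaf ⊕ Bool → ℝ
  | Sum.inl y, Sum.inl x => if x = y then 1 else 0
  | Sum.inr (i, s), Sum.inr true => P.pattern μ t i * sgn s / P.amplitude t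
  | Sum.inr (i, s), Sum.inr false => 1 - P.pattern μ t i * sgn s / P.amplitude t
  | _, _ => 0

lemma sum_abs_leftInverse_le (μ : P.Signs) (t : ℕ) (o : P.Leaf ⊕ (Fin P.pairs × Bool)) :
    ∑ z, |P.leftInverse μ t o z| ≤ 1 / P.α := by
  have hα := P.α_pos
  have hα3 := P.three_mul_α_le_one
  have hone : 2 * (1 / (3 * P.α)) + 1 ≤ 1 / P.α := by
    field_simp
    linarith
  have hpos : 0 < 1 / (3 * P.α) := by positivity
  rw [Fintype.sum_sum_type]
  rcases o with y | ⟨i, s⟩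
  · simp only [leftInverse, abs_zero, sum_const_zero, add_zero, apply_ite abs, abs_one,
      sum_ite_eq', mem_univ, if_true]
    linarith
  · have habs : |P.pattern μ t i * sgn s / P.amplitude t| ≤ 1 / (3 * P.α) := by
      rw [abs_div, abs_mul, abs_pattern, abs_sgn, mul_one, abs_of_pos (P.amplitude_pos t)]
      exact one_div_le_one_div_of_le (by positivity) (P.three_mul_α_le_amplitude t)
    have hsub := abs_sub (1 : ℝ) (P.pattern μ t i * sgn s / P.amplitude t)
    rw [abs_one] at hsub
    simp only [leftInverse, abs_zero, sum_const_zero, zero_add, Fintype.sum_bool]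
    linarith

variable [Fintype O] [DecidableEq A]

lemma sum_leftInverse_mul_emitLatent (μ : P.Signs) (t : ℕ) (z z' : P.Leaf ⊕ Bool) :
    ∑ o, P.leftInverse μ t (P.obs o) z * P.frame.emitLatent (P.signal μ) t z' o =
      if z = z' then 1 else 0 := by
  have hk := P.pairs_ne_zero
  have hamp := (P.amplitude_pos t).ne'
  have hsq (i : Fin P.pairs) : P.pattern μ t i ^ 2 = 1 := by
    rw [← sq_abs, abs_pattern, one_pow]
  have hnone (g : P.Leaf ⊕ (Fin P.pairs × Bool) → ℝ) (c : ℝ)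
      (hg : ∀ i, g (Sum.inr (i, true)) + g (Sum.inr (i, false)) = 2 * c) :
      ∑ o, P.emission none (P.obs o) * g (P.obs o) = c := by
    rw [sum_emission_none_mul]
    simp only [hg, sum_const, card_univ, Fintype.card_fin, nsmul_eq_mul]
    field_simp
  rcases z' with x | _ | _
  · refine (sum_congr rfl fun o _ => mul_comm _ _).trans
      ((P.sum_emission_some_mul x fun o => P.leftInverse μ t o z).trans ?_)
    rcases z with y | y <;> simp [leftInverse]
  · refine (sum_congr rfl fun o _ => mul_comm _ _).trans
      (hnone (fun o => P.leftInverse μ t o z) _ fun i => ?_)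
    rcases z with y | _ | _
    · simp [leftInverse]
    · simp only [leftInverse, sgn, ↓reduceIte, mul_one, Bool.false_eq_true, mul_neg]
      ring
    · simp only [leftInverse, sgn, ↓reduceIte, mul_one, Bool.false_eq_true, mul_neg, Sum.inr.injEq,
        Bool.true_eq_false, mul_zero]
      ring
  · refine (sum_congr rfl fun o _ => show _ = P.emission none (P.obs o) *
        (P.leftInverse μ t (P.obs o) z * (1 + P.deviation μ t (P.obs o))) by
      simp only [LockFrame.emitLatent, frame, signal]; ring).trans
      (hnone (fun o => P.leftInverse μ t o z * (1 + P.deviation μ t o)) _ fun i => ?_)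
    rcases z with y | _ | _
    · simp [leftInverse]
    · simp only [leftInverse, sgn, ↓reduceIte, mul_one, deviation, Bool.false_eq_true, mul_neg,
        Sum.inr.injEq, mul_zero]
      field_simp
      linear_combination (-2 * P.amplitude t) * hsq i
    · simp only [leftInverse, sgn, ↓reduceIte, mul_one, deviation, Bool.false_eq_true, mul_neg]
      field_simp
      linear_combination (2 * P.amplitude t) * hsq i

variable [Fintype S] [Fintype A]

/-- The hard instance with the secret `Z`, in which the secret entry succeeds with probability
`η`. -/
def lockModel (Z : LockSecret P.Leaf A) (μ : P.Signs) (η : unitInterval) : POMDP S O A H :=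
  P.frame.model Z (P.signal μ) P.state (fun o => P.reward (P.obs o)) η

lemma isRevealing_lockModel (Z : LockSecret P.Leaf A) (μ : P.Signs) (η : unitInterval) :
    (P.lockModel Z μ η).IsRevealing 1 P.α := by
  classical
  refine POMDP.isRevealing_one_of_leftInverse _ P.α_pos
    (fun h o s => P.leftInverse μ (h - 1) (P.obs o) (P.state s)) (fun h s s' => ?_) fun h o => ?_
  · refine Eq.trans ?_ (if_congr P.state.apply_eq_iff_eq rfl rfl)
    exact P.sum_leftInverse_mul_emitLatent μ (h - 1) (P.state s) (P.state s')
  · exact (P.state.sum_comp fun z => |P.leftInverse μ (h - 1) (P.obs o) z|).trans_le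
      (P.sum_abs_leftInverse_le μ (h - 1) _)

end LockDesign

/-! ### Near-optimal policies of the hard instances -/

namespace LockDesign
variable {S O A : Type} {H : ℕ} (P : LockDesign S O A H) [Fintype O] [DecidableEq A]

lemma sum_emit_some_mul_reward (y : P.Leaf) :
    ∑ o, P.frame.emit (some y) o * P.reward (P.obs o) = 1 / 2 + 4 * P.ε :=
  P.sum_emission_some_mul y fun o => P.reward o

lemma sum_emit_none_mul_reward : ∑ o, P.frame.emit none o * P.reward (P.obs o) = 1 / 2 := by
  refine (P.sum_emission_none_mul fun o => P.reward o).trans ?_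
  have := P.pairs_ne_zero
  simp only [one_div, mul_inv_rev, reward, ↓reduceIte, Set.Icc.coe_one, Bool.false_eq_true,
    Set.Icc.coe_zero, add_zero, sum_const, card_univ, Fintype.card_fin, nsmul_eq_mul, mul_one]
  field_simp

lemma emit_none_mul_last_deviation_mul_reward (μ : P.Signs) (o : O) :
    P.frame.emit none o * ((1 + (P.signal μ).val (H - 1) o) * P.reward (P.obs o)) =
      P.frame.emit none o * (1 + (P.signal μ).val (H - 1) o) := by
  have hH : H - 1 + 1 = H := Nat.sub_add_cancel P.horizon_pos
  simp only [frame, signal]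
  rcases P.obs o with y | ⟨i, _ | _⟩
  · simp [emission]
  · simp [deviation, amplitude, pattern, hH, sgn]
  · simp [reward]

variable [Fintype S] [Fintype A]

lemma value_lockModel (Z : LockSecret P.Leaf A) (μ : P.Signs) (η : unitInterval)
    (π : Policy O A) :
    (P.lockModel Z μ η).value π = (1 - η) * (1 / 2 + 4 * P.ε * P.frame.outside π H) +
      η * pathExp (P.frame.kernel π) H fun r => P.frame.likRatio Z (P.signal μ) r *
        LockFrame.lastReward (fun o => (P.reward (P.obs o) : ℝ)) r := by
  rw [lockModel, LockFrame.value_model, P.frame.pathExp_lastReward π P.horizon_pos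
    P.sum_emit_some_mul_reward P.sum_emit_none_mul_reward, add_sub_cancel_left]

/-- The success probability of the secret entry. -/
def entryProb : unitInterval :=
  ⟨16 * P.ε, by linarith [P.ε_pos], by linarith [P.ε_le]⟩

/-- The reference instance, in which the lock cannot be opened. -/
def reference : POMDP S O A H :=
  P.lockModel ⟨fun _ _ _ => false, fun _ _ => false⟩ (fun _ => true) 0

/-- The instance with key `θ` and sign pattern `μ`. -/
def keyed (θ : P.Key) (μ : P.Signs) : POMDP S O A H :=
  P.lockModel (P.secret θ) μ P.entryProb

lemma outside_gt_of_reference {π : Policy O A}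
    (hπ : P.reference.optValue - P.reference.value π < P.ε) :
    3 / 4 < P.frame.outside π H := by
  have hopt := P.reference.value_le_optValue (Policy.openLoop fun _ => P.wait)
  simp only [reference, value_lockModel, Set.Icc.coe_zero, sub_zero, one_mul, zero_mul,
    add_zero] at hopt hπ
  rw [LockFrame.outside_openLoop _ P.horizon_pos P.isSome_position_of_follows_wait] at hopt
  nlinarith [P.ε_pos]

lemma outside_lt_of_keyed {θ : P.Key} {μ : P.Signs} {π : Policy O A}
    (hπ : (P.keyed θ μ).optValue - (P.keyed θ μ).value π < P.ε) :
    P.frame.outside π H < 1 / 4 := by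
  have hε := P.ε_pos
  have hε1 := P.ε_le
  have hopt := (P.keyed θ μ).value_le_optValue (Policy.openLoop (P.opening θ))
  have hπval := P.frame.pathExp_likRatio_mul_lastReward_le (P.secret θ) (P.signal μ) π
    P.horizon_pos (fun o => (P.reward (P.obs o)).2.2) P.sum_emit_some_mul_reward
  have hopenval := P.frame.pathExp_likRatio_mul_lastReward_openLoop (P.secret θ) (P.signal μ)
    P.horizon_pos (fun r hr hf => P.consistent_of_follows_opening θ r hf (by
      have := θ.2.1.2
      have := P.lt_horizon
      omega)) (P.emit_none_mul_last_deviation_mul_reward μ)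
  have hout := P.frame.outside_nonneg (Policy.openLoop (P.opening θ)) H
  simp only [keyed, value_lockModel, entryProb] at hopt hπ
  rw [hopenval] at hopt
  have hopen : 0 ≤ (1 - 16 * P.ε) *
      (4 * P.ε * P.frame.outside (Policy.openLoop (P.opening θ)) H) :=
    mul_nonneg (by linarith) (by positivity)
  have hscaled := mul_le_mul_of_nonneg_left hπval (show 0 ≤ 16 * P.ε by positivity)
  nlinarith

end LockDesign

/-! ### Averaging over sign patterns -/

/-- The correlation of two sign patterns. -/
def signCorr {ι : Type*} [Fintype ι] (μ ν : ι → Bool) : ℝ :=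
  1 / Fintype.card ι * ∑ i, sgn (μ i) * sgn (ν i)

lemma cosh_div_pow_le (x : ℝ) (k : ℕ) : Real.cosh (x / k) ^ k ≤ Real.exp (x ^ 2 / k / 2) := by
  calc Real.cosh (x / k) ^ k ≤ Real.exp ((x / k) ^ 2 / 2) ^ k :=
        pow_le_pow_left₀ (Real.cosh_pos _).le (Real.cosh_le_exp_half_sq _) k
    _ = Real.exp (x ^ 2 / k / 2) := by
        rw [← Real.exp_nat_mul]
        congr 1
        rcases eq_or_ne k 0 with rfl | hk
        · simp
        · field_simp

lemma exp_max_zero_le (x : ℝ) : Real.exp (max x 0) ≤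
    9 / 5 + 5 / 4 * Real.exp (2 * x) - 2 * Real.exp x := by
  -- With `w = exp x - 1`, this is `w⁺ ≤ (w + s) ^ 2 / (4 * s)` for `s = 1 / 5`.
  have hsq : Real.exp (2 * x) = Real.exp x ^ 2 := by
    rw [← Real.exp_nat_mul, Nat.cast_ofNat]
  rw [hsq]
  rcases le_total x 0 with h | h
  · rw [max_eq_right h, Real.exp_zero]
    nlinarith [sq_nonneg (Real.exp x - 1 + 1 / 5)]
  · rw [max_eq_left h]
    nlinarith [sq_nonneg (Real.exp x - 1 - 1 / 5)]

section SignPatterns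
variable {ι : Type*} [Fintype ι] [DecidableEq ι]

lemma sum_exp_mul_signCorr (l : ℝ) (μ : ι → Bool) :
    ∑ ν, Real.exp (l * signCorr μ ν) =
      Fintype.card (ι → Bool) * Real.cosh (l / Fintype.card ι) ^ Fintype.card ι := by
  have hprod (ν : ι → Bool) : Real.exp (l * signCorr μ ν) =
      ∏ i, Real.exp (l / Fintype.card ι * (sgn (μ i) * sgn (ν i))) := by
    rw [← Real.exp_sum, ← mul_sum, signCorr]
    ring_nf
  have hcosh (i : ι) : ∑ b, Real.exp (l / Fintype.card ι * (sgn (μ i) * sgn b)) =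
      2 * Real.cosh (l / Fintype.card ι) := by
    rw [Fintype.sum_bool, Real.cosh_eq]
    cases μ i <;> simp [sgn] <;> ring
  simp only [hprod]
  rw [← Fintype.prod_sum fun i b => Real.exp (l / Fintype.card ι * (sgn (μ i) * sgn b)),
    prod_congr rfl fun i _ => hcosh i]
  simp [mul_pow]

lemma sum_exp_max_signCorr_le [Nonempty ι] {l : ℝ} (hl : l ^ 2 ≤ Fintype.card ι / 1000)
    (μ : ι → Bool) :
    ∑ ν, Real.exp (max (l * signCorr μ ν) 0) ≤ 106 / 100 * Fintype.card (ι → Bool) := by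
  have hk : (0 : ℝ) < Fintype.card ι := Nat.cast_pos.2 Fintype.card_pos
  have hlk : l ^ 2 / Fintype.card ι ≤ 1 / 1000 := by
    rw [div_le_iff₀ hk]
    linarith
  have hcosh : 1 ≤ Real.cosh (l / Fintype.card ι) ^ Fintype.card ι :=
    one_le_pow₀ (Real.one_le_cosh _)
  have hcosh2 : Real.cosh (2 * l / Fintype.card ι) ^ Fintype.card ι ≤ 1003 / 1000 := by
    refine (cosh_div_pow_le _ _).trans ?_
    rw [show (2 * l) ^ 2 / Fintype.card ι / 2 = 2 * (l ^ 2 / Fintype.card ι) by ring]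
    refine (Real.exp_bound_div_one_sub_of_interval (by positivity) (by linarith)).trans ?_
    rw [div_le_iff₀ (by linarith)]
    linarith
  calc ∑ ν, Real.exp (max (l * signCorr μ ν) 0)
      ≤ ∑ ν, (9 / 5 + 5 / 4 * Real.exp (2 * l * signCorr μ ν) -
          2 * Real.exp (l * signCorr μ ν)) := by
        simp only [mul_assoc (2 : ℝ)]
        exact sum_le_sum fun ν _ => exp_max_zero_le _
    _ = Fintype.card (ι → Bool) * (9 / 5 +
          5 / 4 * Real.cosh (2 * l / Fintype.card ι) ^ Fintype.card ι -
          2 * Real.cosh (l / Fintype.card ι) ^ Fintype.card ι) := by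
        rw [sum_sub_distrib, sum_add_distrib, ← mul_sum, ← mul_sum, sum_exp_mul_signCorr,
          sum_exp_mul_signCorr, sum_const, card_univ, nsmul_eq_mul]
        ring
    _ ≤ 106 / 100 * Fintype.card (ι → Bool) := by
        rw [mul_comm]
        gcongr
        linarith

lemma sum_sum_exp_signCorr_le [Nonempty ι] {l b : ℝ} (hl0 : 0 ≤ l)
    (hl : l ^ 2 ≤ Fintype.card ι / 1000) (hb : b ≤ 1 / 8) :
    ∑ μ : ι → Bool, ∑ ν, Real.exp (l * max (signCorr μ ν) 0 + b) ≤
      3 / 2 * (Fintype.card (ι → Bool) : ℝ) ^ 2 := by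
  set n : ℝ := (Fintype.card (ι → Bool) : ℝ) with hn
  have hexp : Real.exp b ≤ 8 / 7 :=
    (Real.exp_le_exp.2 hb).trans <|
      (Real.exp_bound_div_one_sub_of_interval (by norm_num) (by norm_num)).trans (by norm_num)
  have hrow (μ : ι → Bool) : ∑ ν, Real.exp (l * max (signCorr μ ν) 0 + b) ≤ 3 / 2 * n := by
    simp only [Real.exp_add, ← sum_mul, mul_max_of_nonneg _ _ hl0, mul_zero]
    calc _ ≤ 106 / 100 * n * (8 / 7) :=
          mul_le_mul (sum_exp_max_signCorr_le hl μ) hexp (Real.exp_pos _).le (by positivity)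
      _ ≤ _ := by linarith [show 0 ≤ n by positivity]
  calc _ ≤ ∑ _μ : ι → Bool, 3 / 2 * n := sum_le_sum fun μ _ => hrow μ
    _ = _ := by
      rw [sum_const, card_univ, nsmul_eq_mul, ← hn]
      ring

end SignPatterns

/-! ### The law of the transcript -/

namespace LockFrame
variable {L O A S : Type} [Fintype O] (F : LockFrame L O A) (Z : LockSecret L A)
  (G : LockSignal F) {H : ℕ}

/-- The likelihood ratio `LockFrame.mixedRatio` of a whole episode. -/
def episodeRatio (η : ℝ) (τ : Fin H → O × A) : ℝ :=
  F.mixedRatio Z G η (List.ofFn τ).reverse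

/-- The exposure of a whole episode. -/
def episodeExposure (w : ℕ → ℝ) (τ : Fin H → O × A) : ℝ :=
  F.exposure Z w (List.ofFn τ).reverse

lemma episodeRatio_nonneg {η : ℝ} (hη0 : 0 ≤ η) (hη1 : η ≤ 1) (τ : Fin H → O × A) :
    0 ≤ F.episodeRatio Z G η τ :=
  F.mixedRatio_nonneg Z G hη0 hη1 _

lemma episodeRatio_zero : F.episodeRatio (H := H) Z G 0 = fun _ => 1 := by
  ext τ
  simp [episodeRatio, mixedRatio]

variable [Fintype A]

/-- The law of the next episode of an algorithm when the good lock state is never reached. -/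
def episodeLaw (𝔄 : Algorithm O A H) (past : List (Fin H → O × A)) (τ : Fin H → O × A) : ℝ :=
  pathWeight (F.kernel (𝔄.policyAt past)) τ

lemma episodeLaw_nonneg (𝔄 : Algorithm O A H) (past : List (Fin H → O × A))
    (τ : Fin H → O × A) : 0 ≤ F.episodeLaw 𝔄 past τ :=
  pathWeight_nonneg (F.kernel_nonneg _) τ

lemma sum_episodeLaw (𝔄 : Algorithm O A H) (past : List (Fin H → O × A)) :
    ∑ τ, F.episodeLaw 𝔄 past τ = 1 := by
  simpa [pathExp, episodeLaw] using pathExp_const (F.sum_kernel (𝔄.policyAt past)) H 1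

lemma sum_episodeLaw_mul_episodeRatio (𝔄 : Algorithm O A H) (η : ℝ)
    (past : List (Fin H → O × A)) :
    ∑ τ, F.episodeLaw 𝔄 past τ * F.episodeRatio Z G η τ = 1 :=
  F.pathExp_mixedRatio Z G (𝔄.policyAt past) H η

variable [Fintype S] [DecidableEq L]

lemma transcriptProb_model (e : S ≃ L ⊕ Bool) (R : O → unitInterval) (η : unitInterval)
    (𝔄 : Algorithm O A H) {T : ℕ} (τs : Fin T → Fin H → O × A) :
    (F.model Z G e R η).transcriptProb 𝔄 τs = pathWeight (F.episodeLaw 𝔄) τs *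
      ((List.ofFn τs).reverse.map (F.episodeRatio Z G η)).prod := by
  rw [List.map_reverse, List.prod_reverse, List.map_ofFn, List.prod_ofFn, pathWeight,
    ← prod_mul_distrib]
  exact prod_congr rfl fun t _ => F.trajProb_model Z G e R η _ _

lemma pacProb_model (e : S ≃ L ⊕ Bool) (R : O → unitInterval) (η : unitInterval)
    (𝔄 : Algorithm O A H) (T : ℕ) (ε : ℝ) :
    (F.model Z G e R η).pacProb 𝔄 T ε = pathExp (F.episodeLaw 𝔄) T
      ({r | (F.model (H := H) Z G e R η).optValue -
        (F.model (H := H) Z G e R η).value (𝔄.out r.reverse) < ε}.indicator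
          fun r => (r.map (F.episodeRatio Z G η)).prod) := by
  classical
  simp only [POMDP.pacProb, pathExp, Set.indicator_apply, Set.mem_ofPred_eq, List.reverse_reverse,
    mul_ite, mul_zero, ← F.transcriptProb_model Z G e R η]

end LockFrame

/-! ### No algorithm beats the budgets -/

namespace LockDesign
variable {S O A : Type} {H : ℕ} (P : LockDesign S O A H) [Fintype O] [DecidableEq A]

lemma likRatio_signal_le_two (Z : LockSecret P.Leaf A) (μ : P.Signs) {r : List (O × A)}
    (hr : r.length < H) : P.frame.likRatio Z (P.signal μ) r ≤ 2 := by
  have hα := P.α_pos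
  have hdev (t : ℕ) (o : O) (ht : t + 1 < H) : (P.signal μ).val t o ≤ 3 * P.α := by
    refine (le_abs_self _).trans ((P.abs_deviation_le μ t _).trans_eq ?_)
    rw [amplitude, if_neg ht.ne]
  have hlen : (r.length : ℝ) * P.α ≤ H * P.α := by gcongr
  calc P.frame.likRatio Z (P.signal μ) r
      ≤ (1 + 3 * P.α) ^ r.length :=
        P.frame.likRatio_le_pow Z (P.signal μ) (by positivity) hdev hr
    _ ≤ Real.exp (3 * P.α) ^ r.length := by
        gcongr
        linarith [Real.add_one_le_exp (3 * P.α)]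
    _ = Real.exp (r.length * (3 * P.α)) := (Real.exp_nat_mul _ _).symm
    _ ≤ Real.exp (Real.log 2) :=
        Real.exp_le_exp.2 (by linarith [P.α_le, Real.log_two_gt_d9])
    _ = 2 := Real.exp_log two_pos

variable [Fintype A]

/-- The likelihood ratios of two sign patterns are correlated by at most
`9 * α ^ 2 * max (signCorr μ ν) 0` per consistent observation before the last one, and by at most
`1` for a consistent last one. -/
lemma sum_episodeLaw_mul_episodeRatio_mul_episodeRatio_le (Z : LockSecret P.Leaf A)
    (𝔄 : Algorithm O A H) (μ ν : P.Signs) (past : List (Fin H → O × A)) :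
    ∑ τ, P.frame.episodeLaw 𝔄 past τ *
      (P.frame.episodeRatio Z (P.signal μ) P.entryProb τ *
        P.frame.episodeRatio Z (P.signal ν) P.entryProb τ *
        Real.exp (-(9216 * P.ε ^ 2 * P.α ^ 2 * max (signCorr μ ν) 0 *
            P.frame.episodeExposure Z (earlyWeight H) τ +
          1024 * P.ε ^ 2 * P.frame.episodeExposure Z (lastWeight H) τ))) ≤ 1 := by
  have hε := P.ε_pos
  have hε1 := P.ε_le
  have hcorr (t : ℕ) (ht : t < H) :
      ∑ o, P.frame.emit none o * ((P.signal μ).val t o * (P.signal ν).val t o) ≤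
        9 * P.α ^ 2 * max (signCorr μ ν) 0 * earlyWeight H t + 1 * lastWeight H t := by
    refine (P.sum_emission_none_mul_deviation_mul_deviation μ ν t).trans_le ?_
    have hk := P.pairs_ne_zero
    by_cases h : t + 1 = H
    · simp [amplitude, pattern, earlyWeight, lastWeight, h, hk]
    · have hlt : t + 1 < H := by omega
      simp only [amplitude, pattern, earlyWeight, lastWeight, h, hlt, if_true, if_false]
      have hle : 1 / (P.pairs : ℝ) * ∑ i, sgn (μ i) * sgn (ν i) ≤ max (signCorr μ ν) 0 := by
        simp [signCorr]
      nlinarith [sq_nonneg P.α]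
  have hmoment := P.frame.pathExp_mixedRatio_mul_mixedRatio_le Z (P.signal μ) (P.signal ν)
    (𝔄.policyAt past) (η := 16 * P.ε) (by positivity) (by linarith)
    (w := fun t => 9 * P.α ^ 2 * max (signCorr μ ν) 0 * earlyWeight H t + 1 * lastWeight H t)
    (fun t => by
      have := le_max_right (signCorr μ ν) 0
      have := earlyWeight_nonneg H t
      have := lastWeight_nonneg H t
      positivity)
    hcorr (fun _ => P.likRatio_signal_le_two Z μ) (fun _ => P.likRatio_signal_le_two Z ν)
  refine le_trans (le_of_eq ?_) hmoment
  simp only [pathExp, LockFrame.exposure_linear]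
  refine sum_congr rfl fun τ _ => ?_
  simp only [LockFrame.episodeLaw, LockFrame.episodeRatio, LockFrame.episodeExposure, entryProb]
  ring_nf

/-- The transcripts (newest episode first) after which the algorithm returns a policy that mostly
stays outside the lock. -/
def avoiding (𝔄 : Algorithm O A H) : Set (List (Fin H → O × A)) :=
  {r | 3 / 4 < P.frame.outside (𝔄.out r.reverse) H}

variable [Fintype S] {𝔄 : Algorithm O A H} {T : ℕ}

lemma le_pathExp_avoiding (hpac : 3 / 4 ≤ P.reference.pacProb 𝔄 T P.ε) :
    3 / 4 ≤ pathExp (P.frame.episodeLaw 𝔄) T ((P.avoiding 𝔄).indicator 1) := by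
  rw [reference, lockModel, LockFrame.pacProb_model] at hpac
  refine hpac.trans (pathExp_mono (P.frame.episodeLaw_nonneg 𝔄) fun r _ => ?_)
  have hone (Z : LockSecret P.Leaf A) (G : LockSignal P.frame) :
      (fun r : List (Fin H → O × A) =>
        (r.map (P.frame.episodeRatio Z G (0 : unitInterval))).prod) = 1 := by
    ext r
    simp [LockFrame.episodeRatio_zero]
  rw [hone]
  exact Set.indicator_le_indicator_of_subset (fun r hr => P.outside_gt_of_reference hr)
    (fun _ => zero_le_one' ℝ) r

lemma pathExp_avoiding_le {θ : P.Key} {μ : P.Signs}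
    (hpac : 3 / 4 ≤ (P.keyed θ μ).pacProb 𝔄 T P.ε) :
    pathExp (P.frame.episodeLaw 𝔄) T ((P.avoiding 𝔄).indicator fun r =>
      (r.map (P.frame.episodeRatio (P.secret θ) (P.signal μ) P.entryProb)).prod) ≤ 1 / 4 := by
  rw [keyed, lockModel, LockFrame.pacProb_model] at hpac
  set lik : List (Fin H → O × A) → ℝ := fun r =>
    (r.map (P.frame.episodeRatio (P.secret θ) (P.signal μ) P.entryProb)).prod
  set good : Set (List (Fin H → O × A)) := {r | _}
  have htotal : pathExp (P.frame.episodeLaw 𝔄) T lik = 1 :=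
    pathExp_prod_map (P.frame.sum_episodeLaw_mul_episodeRatio _ _ 𝔄 _) T
  have hlik (r) : 0 ≤ lik r := List.prod_nonneg fun y hy => by
    obtain ⟨τ, -, rfl⟩ := List.mem_map.1 hy
    exact P.frame.episodeRatio_nonneg _ _ P.entryProb.2.1 P.entryProb.2.2 τ
  have hdisjoint : Disjoint (P.avoiding 𝔄) good := Set.disjoint_left.2 fun r hr hgood => by
    have hlt : P.frame.outside (𝔄.out r.reverse) H < 1 / 4 := P.outside_lt_of_keyed hgood
    have hgt : 3 / 4 < P.frame.outside (𝔄.out r.reverse) H := hr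
    linarith
  have hadd : pathExp (P.frame.episodeLaw 𝔄) T ((P.avoiding 𝔄).indicator lik) +
      pathExp (P.frame.episodeLaw 𝔄) T (good.indicator lik) ≤ 1 := by
    rw [← htotal, ← pathExp_add]
    refine pathExp_mono (P.frame.episodeLaw_nonneg 𝔄) fun r _ => ?_
    calc (P.avoiding 𝔄).indicator lik r + good.indicator lik r
        = (P.avoiding 𝔄 ∪ good).indicator lik r := by
          rw [Set.indicator_union_of_disjoint hdisjoint]
      _ ≤ lik r := Set.indicator_le_self' (fun _ _ => hlik _) r
  linarith

end LockDesign

namespace LockFrame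
variable {L O A : Type} [Fintype O] (F : LockFrame L O A) (Z : LockSecret L A) {H : ℕ}

lemma exposure_le_length {w : ℕ → ℝ} (hw : ∀ t, w t ≤ 1) (r : List (O × A)) :
    F.exposure Z w r ≤ r.length := by
  induction r with
  | nil => simp [exposure]
  | cons x r ih =>
    rw [exposure, List.length_cons, Nat.cast_add_one]
    gcongr
    split_ifs
    exacts [hw _, zero_le_one]

lemma episodeExposure_earlyWeight_le (τ : Fin H → O × A) :
    F.episodeExposure Z (earlyWeight H) τ ≤ H := by
  simpa [episodeExposure] using F.exposure_le_length Z (earlyWeight_le_one H) (List.ofFn τ).reverse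

lemma exposure_lastWeight_le_one {r : List (O × A)} (hr : r.length ≤ H) :
    F.exposure Z (lastWeight H) r ≤ 1 := by
  rcases r with _ | ⟨x, r⟩
  · exact zero_le_one
  · rw [List.length_cons] at hr
    have hbefore : ∀ t < r.length, lastWeight H t = 0 := fun t ht => if_neg (by omega)
    rw [exposure, F.exposure_eq_zero_of_weight Z hbefore, zero_add, lastWeight]
    split_ifs <;> norm_num

end LockFrame

namespace LockDesign
variable {S O A : Type} {H : ℕ} (P : LockDesign S O A H)

section Active
variable [Fintype O] [DecidableEq A]

/-- The transcripts whose total exposures, before the last step and at the last step, stay within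
the budgets `m` and `m'`. -/
def active (Z : LockSecret P.Leaf A) (m m' : ℝ) : Set (List (Fin H → O × A)) :=
  withinBudget (P.frame.episodeExposure Z (earlyWeight H)) m ∩
    withinBudget (P.frame.episodeExposure Z (lastWeight H)) m'

lemma active_of_cons (Z : LockSecret P.Leaf A) {m m' : ℝ} (τ : Fin H → O × A)
    (r : List (Fin H → O × A)) (hr : τ :: r ∈ P.active Z m m') : r ∈ P.active Z m m' :=
  ⟨withinBudget_of_cons (fun _ => P.frame.exposure_nonneg Z (earlyWeight_nonneg H) _) hr.1,
    withinBudget_of_cons (fun _ => P.frame.exposure_nonneg Z (lastWeight_nonneg H) _) hr.2⟩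

end Active

variable [Fintype A]

/-- The number of possible secret entries: a leaf, a time and an action different from `wait`. -/
def entries : ℝ := 2 ^ P.depth * P.window * (Fintype.card A - 1)

lemma entries_pos (hA : 1 < Fintype.card A) : 0 < P.entries := by
  have hA' : (1 : ℝ) < Fintype.card A := Nat.one_lt_cast.2 hA
  have hwindow : (0 : ℝ) < P.window := Nat.cast_pos.2 P.window_pos
  exact mul_pos (by positivity) (by linarith)

lemma nonempty_key (hA : 1 < Fintype.card A) : Nonempty P.Key := by
  obtain ⟨a, ha⟩ := Fintype.exists_ne_of_one_lt_card hA P.wait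
  exact ⟨(fun _ => false, ⟨0, P.window_pos⟩, ⟨a, ha⟩, fun _ => P.wait)⟩

variable [DecidableEq A]

lemma card_key : (Fintype.card P.Key : ℝ) = P.entries * (Fintype.card A : ℝ) ^ H := by
  have hA : 1 ≤ Fintype.card A := Fintype.card_pos_iff.2 ⟨P.wait⟩
  simp only [Key, ne_eq, Fintype.card_prod, Fintype.card_pi, Fintype.card_bool, prod_const,
    card_univ, Fintype.card_fin, Fintype.card_subtype_compl, Fintype.card_unique, Nat.cast_mul,
    Nat.cast_pow, Nat.cast_ofNat, Nat.cast_sub hA, Nat.cast_one, entries]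
  ring

variable [Fintype O]

lemma sum_episodeExposure_earlyWeight_le (hA : 3 ≤ Fintype.card A) (τ : Fin H → O × A) :
    ∑ θ, P.frame.episodeExposure (P.secret θ) (earlyWeight H) τ ≤
      Fintype.card P.Key * (3 / 2 / P.entries) := by
  have hentries := P.entries_pos (by omega)
  have hle := sum_exposure_le (P := P) hA (earlyWeight_le_one H) (r := (List.ofFn τ).reverse)
    (by simp)
  refine hle.trans_eq ?_
  rw [card_key]
  field_simp

lemma sum_episodeExposure_lastWeight_le (hA : 1 < Fintype.card A) (τ : Fin H → O × A) :
    ∑ θ, P.frame.episodeExposure (P.secret θ) (lastWeight H) τ ≤ Fintype.card P.Key *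
      ((Fintype.card A : ℝ) ^ (P.depth + P.window) /
        ((Fintype.card A : ℝ) ^ (H - 1) * P.entries)) := by
  have hentries := P.entries_pos hA
  have : (0 : ℝ) < Fintype.card A := Nat.cast_pos.2 (by omega)
  have hle := sum_exposure_lastWeight_mul_pow_le (P := P) (r := (List.ofFn τ).reverse) (by simp)
  rw [← le_div_iff₀ (by positivity)] at hle
  refine hle.trans_eq ?_
  rw [card_key]
  field_simp

lemma pathExp_stoppedProd_episodeRatio_mul_le (Z : LockSecret P.Leaf A) (𝔄 : Algorithm O A H)
    (μ ν : P.Signs) {m m' : ℝ} (hm : 0 ≤ m) (hm' : 0 ≤ m') (T : ℕ) :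
    pathExp (P.frame.episodeLaw 𝔄) T (fun r =>
      stoppedProd (P.active Z m m') (P.frame.episodeRatio Z (P.signal μ) P.entryProb) r *
        stoppedProd (P.active Z m m') (P.frame.episodeRatio Z (P.signal ν) P.entryProb) r) ≤
      Real.exp (9216 * P.ε ^ 2 * P.α ^ 2 * (m + H) * max (signCorr μ ν) 0 +
        1024 * P.ε ^ 2 * (m' + 1)) := by
  have hratio (μ : P.Signs) := P.frame.episodeRatio_nonneg (H := H) Z (P.signal μ)
    P.entryProb.2.1 P.entryProb.2.2
  refine pathExp_stoppedProd_mul_stoppedProd_le (P.frame.episodeLaw_nonneg 𝔄)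
    (P.frame.sum_episodeLaw 𝔄) (hratio μ) (hratio ν) (P.active_of_cons Z) (by positivity) ?_
    (P.sum_episodeLaw_mul_episodeRatio_mul_episodeRatio_le Z 𝔄 μ ν) T
  intro τ r hr
  have hearly : ((τ :: r).map (P.frame.episodeExposure Z (earlyWeight H))).sum ≤ m + H := by
    rw [List.map_cons, List.sum_cons, add_comm]
    exact add_le_add hr.1 (P.frame.episodeExposure_earlyWeight_le Z τ)
  have hlast : ((τ :: r).map (P.frame.episodeExposure Z (lastWeight H))).sum ≤ m' + 1 := by
    rw [List.map_cons, List.sum_cons, add_comm]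
    exact add_le_add hr.2 (P.frame.exposure_lastWeight_le_one Z (by simp))
  rw [List.sum_map_add, List.sum_map_mul_left, List.sum_map_mul_left, mul_right_comm _ (m + H)]
  gcongr

lemma one_div_fifty_lt_of_pac [Fintype S] (hA : 3 ≤ Fintype.card A) {m m' : ℝ} (hm : 0 < m)
    (hm' : 0 < m') (hl : (9216 * P.ε ^ 2 * P.α ^ 2 * (m + H)) ^ 2 ≤ P.pairs / 1000)
    (hl' : 1024 * P.ε ^ 2 * (m' + 1) ≤ 1 / 8) {T : ℕ} {𝔄 : Algorithm O A H}
    (hreference : 3 / 4 ≤ P.reference.pacProb 𝔄 T P.ε)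
    (hkeyed : ∀ θ μ, 3 / 4 ≤ (P.keyed θ μ).pacProb 𝔄 T P.ε) :
    1 / 50 < T * (3 / 2 / P.entries) / m +
      T * ((Fintype.card A : ℝ) ^ (P.depth + P.window) /
        ((Fintype.card A : ℝ) ^ (H - 1) * P.entries)) / m' := by
  have := P.nonempty_key (by omega)
  have : Nonempty (Fin P.pairs) := ⟨⟨0, P.pairs_pos⟩⟩
  obtain ⟨θ, hθ⟩ := exists_pathExp_indicator_compl_le (P.frame.episodeLaw_nonneg 𝔄)
    (P.frame.sum_episodeLaw 𝔄)
    (fun θ τ => P.frame.exposure_nonneg (P.secret θ) (earlyWeight_nonneg H) _)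
    (fun θ τ => P.frame.exposure_nonneg (P.secret θ) (lastWeight_nonneg H) _)
    (P.sum_episodeExposure_earlyWeight_le hA)
    (P.sum_episodeExposure_lastWeight_le (by omega)) hm hm' T
  have hmoment := (sum_le_sum fun μ _ => sum_le_sum fun ν _ =>
    P.pathExp_stoppedProd_episodeRatio_mul_le (P.secret θ) 𝔄 μ ν hm.le hm'.le T).trans
      (sum_sum_exp_signCorr_le (by positivity) (by rwa [Fintype.card_fin]) hl')
  exact (one_div_fifty_lt_of_mixture (P.frame.episodeLaw_nonneg 𝔄) (P.frame.sum_episodeLaw 𝔄)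
    (fun μ => P.frame.episodeRatio_nonneg (P.secret θ) (P.signal μ) P.entryProb.2.1
      P.entryProb.2.2)
    (fun μ => P.frame.sum_episodeLaw_mul_episodeRatio (P.secret θ) (P.signal μ) 𝔄 P.entryProb)
    (P.active_of_cons (P.secret θ)) hmoment (P.le_pathExp_avoiding hreference)
    fun μ => P.pathExp_avoiding_le (hkeyed θ μ)).trans_le hθ

end LockDesign

/-! ### The number of episodes -/

lemma rpow_half_le_mul {a : ℝ} (ha : 1 ≤ a) {n : ℕ} (hn : 0 < n) :
    a ^ ((n : ℝ) / 2) ≤ a * (a ^ (n - 1) / a ^ (n / 2)) := by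
  have hhalf : (n : ℝ) / 2 ≤ (n - n / 2 : ℕ) := by
    rw [div_le_iff₀ two_pos]
    exact_mod_cast (by omega : n ≤ (n - n / 2) * 2)
  calc a ^ ((n : ℝ) / 2) ≤ a ^ ((n - n / 2 : ℕ) : ℝ) :=
        Real.rpow_le_rpow_of_exponent_le ha hhalf
    _ = a * (a ^ (n - 1) / a ^ (n / 2)) := by
        rw [Real.rpow_natCast, ← mul_div_assoc, eq_div_iff (by positivity), ← pow_add, ← pow_succ']
        congr 1
        omega

namespace LockDesign
variable {S O A : Type} {H : ℕ} (P : LockDesign S O A H)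

lemma sq_signal_budget_le :
    (9216 * P.ε ^ 2 * P.α ^ 2 * (√P.pairs / (10 ^ 6 * P.α ^ 2 * P.ε ^ 2) + H)) ^ 2 ≤
      P.pairs / 1000 := by
  have hα := P.α_pos
  have hε := P.ε_pos
  have hpairs : 1 ≤ √(P.pairs : ℝ) := Real.one_le_sqrt.2 (Nat.one_le_cast.2 P.pairs_pos)
  have hH : (2 : ℝ) ≤ H := by
    have := P.lt_horizon
    have := P.window_pos
    exact_mod_cast (by omega : 2 ≤ H)
  have hα_le : P.α ≤ 1 / 10 := by nlinarith [P.α_le]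
  have hε_sq : P.ε ^ 2 ≤ (1 / 100) ^ 2 := pow_le_pow_left₀ hε.le P.ε_le 2
  have hαH : P.α * (H * P.α) ≤ 1 / 10 * (1 / 5) :=
    mul_le_mul hα_le (by linarith [P.α_le]) (by positivity) (by norm_num)
  have hlength : P.ε ^ 2 * (P.α * (H * P.α)) ≤ (1 / 100) ^ 2 * (1 / 10 * (1 / 5)) :=
    mul_le_mul hε_sq hαH (by positivity) (by norm_num)
  have hsqrt : 9216 * P.ε ^ 2 * P.α ^ 2 * (√P.pairs / (10 ^ 6 * P.α ^ 2 * P.ε ^ 2) + H) ≤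
      √P.pairs / 32 := by
    calc _ = 9216 / 10 ^ 6 * √P.pairs + 9216 * (P.ε ^ 2 * (P.α * (H * P.α))) := by field_simp
      _ ≤ _ := by linarith
  calc _ ≤ (√P.pairs / 32) ^ 2 := pow_le_pow_left₀ (by positivity) hsqrt 2
    _ = (P.pairs : ℝ) / 1024 := by
      rw [div_pow, Real.sq_sqrt (Nat.cast_nonneg _)]
      norm_num
    _ ≤ _ := by gcongr; norm_num

lemma last_budget_le : 1024 * P.ε ^ 2 * (1 / (10 ^ 6 * P.ε ^ 2) + 1) ≤ 1 / 8 := by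
  have hε := P.ε_pos
  have hε_sq : P.ε ^ 2 ≤ (1 / 100) ^ 2 := pow_le_pow_left₀ hε.le P.ε_le 2
  calc _ = 1024 / 10 ^ 6 + 1024 * P.ε ^ 2 := by field_simp
    _ ≤ _ := by linarith

variable [Fintype S] [Fintype O] [Fintype A] [DecidableEq A]

/-- The hard family: the reference instance and all instances with a key and a sign pattern. -/
def family : Set (POMDP S O A H) :=
  insert P.reference (Set.range fun p : P.Key × P.Signs => P.keyed p.1 p.2)

lemma finite_family : P.family.Finite := (Set.finite_range _).insert _

lemma isRevealing_of_mem_family {M : POMDP S O A H} (hM : M ∈ P.family) : M.IsRevealing 1 P.α := by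
  rcases hM with rfl | ⟨p, rfl⟩ <;> exact P.isRevealing_lockModel _ _ _

variable {P}

lemma min_entries_le_episodes (hA : 3 ≤ Fintype.card A) {T : ℕ} {𝔄 : Algorithm O A H}
    (hpac : ∀ M ∈ P.family, 3 / 4 ≤ M.pacProb 𝔄 T P.ε) :
    min (√P.pairs * P.entries / (P.α ^ 2 * P.ε ^ 2))
      ((Fintype.card A : ℝ) ^ (H - 1) / (Fintype.card A : ℝ) ^ (P.depth + P.window) *
        P.entries / P.ε ^ 2) ≤ 10 ^ 9 * T := by
  have hα := P.α_pos
  have hε := P.ε_pos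
  have hentries := P.entries_pos (by omega)
  have hpairs : 0 < √(P.pairs : ℝ) := Real.sqrt_pos.2 (Nat.cast_pos.2 P.pairs_pos)
  have : (0 : ℝ) < Fintype.card A := Nat.cast_pos.2 (by omega)
  have hsum := P.one_div_fifty_lt_of_pac hA (by positivity) (by positivity) P.sq_signal_budget_le
    P.last_budget_le (hpac _ (Set.mem_insert _ _))
    fun θ μ => hpac _ (Set.mem_insert_of_mem _ ⟨(θ, μ), rfl⟩)
  have : (0 : ℝ) ≤ T := Nat.cast_nonneg T
  set m₁ := √P.pairs * P.entries / (P.α ^ 2 * P.ε ^ 2) with hm₁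
  set m₂ := (Fintype.card A : ℝ) ^ (H - 1) / (Fintype.card A : ℝ) ^ (P.depth + P.window) *
    P.entries / P.ε ^ 2 with hm₂
  have hm₁pos : 0 < m₁ := by positivity
  have hm₂pos : 0 < m₂ := by positivity
  have hsum' : 1 / 50 < 3 / 2 * 10 ^ 6 * T / m₁ + 10 ^ 6 * T / m₂ := by
    refine hsum.trans_eq ?_
    rw [hm₁, hm₂]
    field_simp
  by_contra! hlt
  obtain ⟨hlt₁, hlt₂⟩ := lt_min_iff.1 hlt
  have hfrac₁ : 3 / 2 * 10 ^ 6 * T / m₁ ≤ 1 / 100 := by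
    rw [div_le_iff₀ hm₁pos]
    linarith
  have hfrac₂ : 10 ^ 6 * T / m₂ ≤ 1 / 100 := by
    rw [div_le_iff₀ hm₂pos]
    linarith
  linarith

lemma min_sizes_le_episodes {s o : ℝ} (hA : 3 ≤ Fintype.card A) (hs0 : 0 ≤ s)
    (hs : s * Fintype.card A * H ≤ 24 * P.entries) (ho : o ≤ 6 * P.pairs)
    (hhalf : P.depth + P.window = H / 2) {T : ℕ} {𝔄 : Algorithm O A H}
    (hpac : ∀ M ∈ P.family, 3 / 4 ≤ M.pacProb 𝔄 T P.ε) :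
    1 / 10 ^ 12 * min (s * √o * Fintype.card A * H / (P.α ^ 2 * P.ε ^ 2))
      (s * (Fintype.card A : ℝ) ^ ((H : ℝ) / 2) * H / P.ε ^ 2) ≤ T := by
  have hα := P.α_pos
  have hε := P.ε_pos
  have hA' : (3 : ℝ) ≤ Fintype.card A := by exact_mod_cast hA
  set a : ℝ := (Fintype.card A : ℝ)
  have : 0 < a := by linarith
  have hentries := P.entries_pos (by omega)
  have hsqrt : √o ≤ 3 * √P.pairs := by
    rw [Real.sqrt_le_left (by positivity), mul_pow, Real.sq_sqrt (Nat.cast_nonneg _)]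
    linarith [Nat.cast_nonneg (α := ℝ) P.pairs]
  have hrpow := rpow_half_le_mul (show 1 ≤ a by linarith) P.horizon_pos
  rw [← hhalf] at hrpow
  have hfirst : s * √o * a * H / (P.α ^ 2 * P.ε ^ 2) ≤
      72 * (√P.pairs * P.entries / (P.α ^ 2 * P.ε ^ 2)) := by
    rw [← mul_div_assoc]
    gcongr ?_ / _
    calc s * √o * a * H ≤ s * a * H * (3 * √P.pairs) := by
          rw [mul_right_comm s, mul_right_comm (s * a)]
          gcongr
      _ ≤ 24 * P.entries * (3 * √P.pairs) := by gcongr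
      _ = _ := by ring
  have hsecond : s * a ^ ((H : ℝ) / 2) * H / P.ε ^ 2 ≤
      72 * (a ^ (H - 1) / a ^ (P.depth + P.window) * P.entries / P.ε ^ 2) := by
    rw [← mul_div_assoc]
    gcongr ?_ / _
    set q := a ^ (H - 1) / a ^ (P.depth + P.window)
    have hq : 0 ≤ q * P.entries := by positivity
    calc s * a ^ ((H : ℝ) / 2) * H ≤ s * (a * q) * H := by gcongr
      _ = s * a * H * q := by ring
      _ ≤ 24 * P.entries * q := by gcongr
      _ ≤ 72 * (q * P.entries) := by linarith
  have hmin := min_le_min hfirst hsecond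
  rw [← mul_min_of_nonneg _ _ (by norm_num)] at hmin
  linarith [min_entries_le_episodes hA hpac, Nat.cast_nonneg (α := ℝ) T]

end LockDesign

lemma exists_sizes {S O H : ℕ} (hS : 5 ≤ S) (hO : S ≤ O) (hH : 4 * Real.logb 2 S ≤ (H : ℝ)) :
    ∃ d k N : ℕ, 2 ^ d + 2 ≤ S ∧ S ≤ 4 * 2 ^ d ∧ 0 < k ∧ 2 ^ d + k * 2 ≤ O ∧ O ≤ 6 * k ∧
      0 < N ∧ H ≤ 4 * N ∧ d + N = H / 2 := by
  obtain ⟨d, hd⟩ : ∃ d, Nat.log 2 S = d + 2 := by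
    have : 2 ≤ Nat.log 2 S := Nat.le_log_of_pow_le (by norm_num) (by omega)
    exact ⟨Nat.log 2 S - 2, by omega⟩
  have hpow_le : 2 ^ (d + 2) ≤ S := hd ▸ Nat.pow_log_le_self 2 (by omega)
  have hlt_pow : S < 2 ^ (d + 3) := by
    have := Nat.lt_pow_succ_log_self (b := 2) (by norm_num) S
    rwa [hd] at this
  have hdepth : 4 * (d + 2) ≤ H := by
    have hlogb : ((d + 2 : ℕ) : ℝ) ≤ Real.logb 2 S := by
      rw [Real.le_logb_iff_rpow_le (by norm_num) (by exact_mod_cast (by omega : 0 < S)),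
        Real.rpow_natCast]
      exact_mod_cast hpow_le
    have hcast : ((4 * (d + 2) : ℕ) : ℝ) ≤ H := by
      push_cast at hlogb ⊢
      linarith
    exact_mod_cast hcast
  refine ⟨d + 1, (O - 2 ^ (d + 1)) / 2, H / 2 - (d + 1), ?_⟩
  rw [show 2 ^ (d + 2) = 2 * 2 ^ (d + 1) by ring] at hpow_le
  rw [show 2 ^ (d + 3) = 4 * 2 ^ (d + 1) by ring] at hlt_pow
  omega

lemma exists_lockDesign {S O A H : ℕ} (hS : 5 ≤ S) (hO : S ≤ O) (hA : 3 ≤ A)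
    (hH : 4 * Real.logb 2 S ≤ (H : ℝ)) {α : ℝ} (hα : 0 < α) (hαH : α ≤ 1 / (5 * H)) {ε : ℝ}
    (hε : 0 < ε) (hε1 : ε ≤ 1 / 100) :
    ∃ σ ω : ℕ, 0 < σ ∧ σ ≤ S ∧ 0 < ω ∧ ω ≤ O ∧ ∃ P : LockDesign (Fin σ) (Fin ω) (Fin A) H,
      P.α = α ∧ P.ε = ε ∧ (S : ℝ) * A * H ≤ 24 * P.entries ∧ (O : ℝ) ≤ 6 * P.pairs ∧
        P.depth + P.window = H / 2 := by
  obtain ⟨d, k, N, hdS, hSd, hk, hkO, hOk, hN, hHN, hdN⟩ := exists_sizes hS hO hH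
  have hH0 : (0 : ℝ) < H := Nat.cast_pos.2 (by omega)
  let P : LockDesign (Fin (2 ^ d + 2)) (Fin (2 ^ d + k * 2)) (Fin A) H :=
    { depth := d, pairs := k, window := N, pairs_pos := hk, window_pos := hN
      lt_horizon := by omega
      state := Fintype.equivOfCardEq (by simp)
      obs := Fintype.equivOfCardEq (by simp)
      wait := ⟨0, by omega⟩
      α := α, α_pos := hα
      α_le := by
        rw [le_div_iff₀ (by positivity)] at hαH
        linarith
      ε := ε, ε_pos := hε, ε_le := hε1 }
  refine ⟨_, _, by positivity, hdS, by positivity, hkO, P, rfl, rfl, ?_, by exact_mod_cast hOk, hdN⟩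
  have hA' : (A : ℝ) ≤ 3 / 2 * (A - 1) := by
    have : (3 : ℝ) ≤ A := by exact_mod_cast hA
    linarith
  have hSd' : (S : ℝ) ≤ 4 * 2 ^ d := by exact_mod_cast hSd
  have hHN' : (H : ℝ) ≤ 4 * N := by exact_mod_cast hHN
  have hA1 : (0 : ℝ) ≤ A - 1 := by linarith [Nat.cast_nonneg (α := ℝ) A]
  calc (S : ℝ) * A * H ≤ 4 * 2 ^ d * (3 / 2 * (A - 1)) * (4 * N) := by gcongr
    _ = 24 * P.entries := by
      rw [LockDesign.entries, Fintype.card_fin]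
      ring

/-- **PAC lower bound for single-step revealing POMDPs** (Theorem 3.1).
There is an absolute constant `c > 0` such that for all `O ≥ S ≥ 5`, `A ≥ 3`,
`H ≥ 4 log₂ S`, `α ∈ (0, 1/(5H)]` and `ε ∈ (0, 0.01]`, there is a finite family `ℳ` of
single-step `α`-revealing POMDPs with `|𝒮| ≤ S`, `|𝒪| ≤ O`, `|𝒜| = A` such that any
`T`-episode algorithm returning an `ε`-optimal policy with probability `≥ 3/4` on every
member of `ℳ` must have `T ≥ c · min{ S·√O·A·H/(α²ε²), S·A^{H/2}·H/ε² }`. -/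
theorem one_step_revealing_pac_lower_bound :
    ∃ c : ℝ, 0 < c ∧
      ∀ (S O A H : ℕ), 5 ≤ S → S ≤ O → 3 ≤ A →
        4 * Real.logb 2 S ≤ (H : ℝ) →
        ∀ α : ℝ, 0 < α → α ≤ 1 / (5 * H) →
        ∀ ε : ℝ, 0 < ε → ε ≤ 0.01 →
        ∃ (σ ω : ℕ), 0 < σ ∧ σ ≤ S ∧ 0 < ω ∧ ω ≤ O ∧
          ∃ ℳ : Set (POMDP (Fin σ) (Fin ω) (Fin A) H),
            ℳ.Finite ∧
            (∀ M ∈ ℳ, M.IsRevealing 1 α) ∧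
            ∀ (T : ℕ) (𝔄 : Algorithm (Fin ω) (Fin A) H),
              (∀ M ∈ ℳ, (3 : ℝ) / 4 ≤ M.pacProb 𝔄 T ε) →
              c * min ((S : ℝ) * Real.sqrt O * A * H / (α ^ 2 * ε ^ 2))
                  ((S : ℝ) * (A : ℝ) ^ ((H : ℝ) / 2) * H / ε ^ 2) ≤ (T : ℝ) := by
  refine ⟨1 / 10 ^ 12, by positivity, fun S O A H hS hO hA hH α hα hαH ε hε hε1 => ?_⟩
  obtain ⟨σ, ω, hσ, hσS, hω, hωO, P, rfl, rfl, hentries, hpairs, hhalf⟩ :=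
    exists_lockDesign hS hO hA hH hα hαH hε (hε1.trans_eq (by norm_num))
  refine ⟨σ, ω, hσ, hσS, hω, hωO, P.family, P.finite_family,
    fun M hM => P.isRevealing_of_mem_family hM, fun T 𝔄 hpac => ?_⟩
  have hle := LockDesign.min_sizes_le_episodes (by simpa using hA) (Nat.cast_nonneg S)
    (by simpa using hentries) hpairs hhalf hpac
  simpa only [Fintype.card_fin] using hle
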